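/- arXiv:math/0309201 — 2 statements merged into one kernel-verified Lean document; each statement's English description precedes it below -/
import Mathlib

section
/- Both y₁(q) = q^{11/60}∏_{n≥0}1/((1-q^{5n+2})(1-q^{5n+3})) and y₂(q) = q^{-1/60}∏_{n≥0}1/((1-q^{5n+1})(1-q^{5n+4})) satisfy the second-order ODE (q d/dq)²F + 2Ẽ₂(q)(q d/dq)F - (11/5)Ẽ₄(q)F = 0, where Ẽ₂(q) = -1/12 + 2∑_{n≥1}σ₁(n)q^n and Ẽ₄(q) = 1/720 + (1/3)∑_{n≥1}σ₃(n)q^n. -/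
open scoped BigOperators Real

open Complex

open Finset in
/-- The solutions of `a * x + b * y = n` in positive integers, as quadruples `((a, x), (b, y))`. -/
def bilinearSolutions (n : ℕ) : Finset ((ℕ × ℕ) × (ℕ × ℕ)) :=
  (antidiagonal n).biUnion fun p ↦ p.1.divisorsAntidiagonal ×ˢ p.2.divisorsAntidiagonal

lemma mem_bilinearSolutions {n : ℕ} {p : (ℕ × ℕ) × (ℕ × ℕ)} :
    p ∈ bilinearSolutions n ↔ p.1.1 * p.1.2 + p.2.1 * p.2.2 = n ∧
      0 < p.1.1 ∧ 0 < p.1.2 ∧ 0 < p.2.1 ∧ 0 < p.2.2 := by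
  obtain ⟨⟨a, x⟩, b, y⟩ := p
  simp only [bilinearSolutions, Finset.mem_biUnion, Finset.HasAntidiagonal.mem_antidiagonal,
    Finset.mem_product, Nat.mem_divisorsAntidiagonal, Prod.exists]
  constructor
  · rintro ⟨i, j, rfl, ⟨rfl, hi⟩, rfl, hj⟩
    simp only [ne_eq, mul_eq_zero, not_or] at hi hj
    omega
  · rintro ⟨h, ha, hx, hb, hy⟩
    exact ⟨_, _, h, ⟨rfl, by positivity⟩, rfl, by positivity⟩

open Finset in
lemma sum_antidiagonal_divisors_mul (u v : ℕ → ℂ) (n : ℕ) :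
    ∑ p ∈ antidiagonal n, (∑ d ∈ p.1.divisors, u d) * (∑ d ∈ p.2.divisors, v d) =
      ∑ p ∈ bilinearSolutions n, u p.1.1 * v p.2.1 := by
  rw [bilinearSolutions, sum_biUnion]
  · refine sum_congr rfl fun p _ ↦ ?_
    rw [← Nat.sum_divisorsAntidiagonal (f := fun d _ ↦ u d),
      ← Nat.sum_divisorsAntidiagonal (f := fun d _ ↦ v d), sum_mul_sum, sum_product]
  · rintro ⟨i, j⟩ - ⟨i', j'⟩ - hne
    refine disjoint_left.mpr ?_
    rintro ⟨⟨a, x⟩, b, y⟩ h h'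
    simp only [mem_product, Nat.mem_divisorsAntidiagonal] at h h'
    exact hne (by rw [← h.1.1, ← h.2.1, ← h'.1.1, ← h'.2.1])

open Finset in
lemma sum_bilinearSolutions_swap (p : (ℕ × ℕ) × (ℕ × ℕ) → Prop) [DecidablePred p]
    (f : (ℕ × ℕ) × (ℕ × ℕ) → ℂ) (n : ℕ) :
    ∑ s ∈ bilinearSolutions n with p s, f s =
      ∑ s ∈ bilinearSolutions n with p s.swap, f s.swap := by
  refine sum_nbij' Prod.swap Prod.swap ?_ ?_ ?_ ?_ ?_
  all_goals
    rintro ⟨⟨a, x⟩, b, y⟩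
    simp only [mem_filter, mem_bilinearSolutions, Prod.swap]
    try grind

open Finset in
/-- The substitution `(a, x, b, y) ↦ (a - b, x, b, x + y)` behind Liouville's identities. -/
lemma sum_bilinearSolutions_sub (h : ℕ → ℕ → ℂ) (n : ℕ) :
    ∑ s ∈ bilinearSolutions n with s.2.1 < s.1.1, h (s.1.1 - s.2.1) s.2.1 =
      ∑ s ∈ bilinearSolutions n with s.1.2 < s.2.2, h s.1.1 s.2.1 := by
  refine sum_nbij' (fun s ↦ ((s.1.1 - s.2.1, s.1.2), (s.2.1, s.1.2 + s.2.2)))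
    (fun s ↦ ((s.1.1 + s.2.1, s.1.2), (s.2.1, s.2.2 - s.1.2))) ?_ ?_ ?_ ?_ ?_
  · rintro ⟨⟨a, x⟩, b, y⟩
    simp only [mem_filter, mem_bilinearSolutions]
    rintro ⟨⟨hn, ha, hx, hb, hy⟩, hlt⟩
    obtain ⟨e, rfl⟩ := Nat.exists_eq_add_of_lt hlt
    refine ⟨⟨?_, by omega, hx, hb, by omega⟩, by omega⟩
    rw [← hn, show b + e + 1 - b = e + 1 by omega]
    ring
  · rintro ⟨⟨a, x⟩, b, y⟩
    simp only [mem_filter, mem_bilinearSolutions]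
    rintro ⟨⟨hn, ha, hx, hb, hy⟩, hlt⟩
    obtain ⟨e, rfl⟩ := Nat.exists_eq_add_of_lt hlt
    refine ⟨⟨?_, by omega, hx, hb, by omega⟩, by omega⟩
    rw [← hn, show x + e + 1 - x = e + 1 by omega]
    ring
  · rintro ⟨⟨a, x⟩, b, y⟩
    simp only [mem_filter, mem_bilinearSolutions]
    rintro ⟨-, hlt⟩
    simp only [Prod.mk.injEq, and_true, true_and]
    omega
  · rintro ⟨⟨a, x⟩, b, y⟩
    simp only [mem_filter, mem_bilinearSolutions]
    rintro ⟨-, hlt⟩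
    simp only [Prod.mk.injEq, and_true, true_and]
    omega
  · simp

open Finset in
lemma sum_bilinearSolutions_diag (h : ℕ → ℕ → ℂ) (n : ℕ) :
    ∑ s ∈ bilinearSolutions n with s.1.2 = s.2.2, h s.1.1 s.2.1 =
      ∑ d ∈ n.divisors, ∑ a ∈ Ico 1 d, h a (d - a) := by
  rw [← Nat.sum_divisorsAntidiagonal (f := fun d _ ↦ ∑ a ∈ Ico 1 d, h a (d - a)), sum_sigma']
  refine sum_nbij' (fun s ↦ ⟨(s.1.1 + s.2.1, s.1.2), s.1.1⟩)
    (fun t ↦ ((t.2, t.1.2), (t.1.1 - t.2, t.1.2))) ?_ ?_ ?_ ?_ ?_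
  · rintro ⟨⟨a, x⟩, b, y⟩
    simp only [mem_filter, mem_bilinearSolutions, mem_sigma, Nat.mem_divisorsAntidiagonal, mem_Ico]
    rintro ⟨⟨hn, ha, hx, hb, hy⟩, rfl⟩
    refine ⟨⟨by rw [← hn]; ring, ?_⟩, by omega, by omega⟩
    rw [← hn]; positivity
  · rintro ⟨⟨d, x⟩, a⟩
    simp only [mem_filter, mem_bilinearSolutions, mem_sigma, Nat.mem_divisorsAntidiagonal, mem_Ico]
    rintro ⟨⟨hn, hn0⟩, ha, had⟩
    obtain ⟨e, rfl⟩ := Nat.exists_eq_add_of_lt had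
    have hx : 0 < x := Nat.pos_of_ne_zero (by rintro rfl; simp at hn; omega)
    refine ⟨⟨?_, by omega, hx, by omega, hx⟩, trivial⟩
    rw [← hn, show a + e + 1 - a = e + 1 by omega]
    ring
  · rintro ⟨⟨a, x⟩, b, y⟩
    simp only [mem_filter, mem_bilinearSolutions, Prod.mk.injEq, and_imp]
    rintro - - - - - rfl
    simp
  · rintro ⟨⟨d, x⟩, a⟩
    simp only [mem_sigma, mem_Ico, Sigma.mk.injEq, Prod.mk.injEq, heq_eq_eq, and_true]
    omega
  · rintro ⟨⟨a, x⟩, b, y⟩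
    simp

open Finset in
lemma sum_bilinearSolutions_diag' (k : ℕ → ℂ) (n : ℕ) :
    ∑ s ∈ bilinearSolutions n with s.1.1 = s.2.1, k s.1.1 =
      ∑ d ∈ n.divisors, ((n / d : ℕ) - 1 : ℂ) * k d := by
  have key : ∑ s ∈ bilinearSolutions n with s.1.1 = s.2.1, k s.1.1 =
      ∑ s ∈ n.divisorsAntidiagonal, ∑ x ∈ Ico 1 s.2, k s.1 := by
    rw [sum_sigma']
    refine sum_nbij' (fun s ↦ ⟨(s.1.1, s.1.2 + s.2.2), s.1.2⟩)
      (fun t ↦ ((t.1.1, t.2), (t.1.1, t.1.2 - t.2))) ?_ ?_ ?_ ?_ ?_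
    · rintro ⟨⟨a, x⟩, b, y⟩
      simp only [mem_filter, mem_bilinearSolutions, mem_sigma, Nat.mem_divisorsAntidiagonal,
        mem_Ico]
      rintro ⟨⟨hn, ha, hx, hb, hy⟩, rfl⟩
      refine ⟨⟨by rw [← hn]; ring, ?_⟩, by omega, by omega⟩
      rw [← hn]; positivity
    · rintro ⟨⟨a, d⟩, x⟩
      simp only [mem_filter, mem_bilinearSolutions, mem_sigma, Nat.mem_divisorsAntidiagonal,
        mem_Ico]
      rintro ⟨⟨hn, hn0⟩, hx, hxd⟩
      obtain ⟨e, rfl⟩ := Nat.exists_eq_add_of_lt hxd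
      have ha : 0 < a := Nat.pos_of_ne_zero (by rintro rfl; simp at hn; omega)
      refine ⟨⟨?_, ha, by omega, ha, by omega⟩, trivial⟩
      rw [← hn, show x + e + 1 - x = e + 1 by omega]
      ring
    · rintro ⟨⟨a, x⟩, b, y⟩
      simp only [mem_filter, mem_bilinearSolutions, Prod.mk.injEq, and_imp]
      rintro - - - - - rfl
      simp
    · rintro ⟨⟨a, d⟩, x⟩
      simp only [mem_sigma, mem_Ico, Sigma.mk.injEq, Prod.mk.injEq, heq_eq_eq, and_true, true_and]
      omega
    · simp
  rw [key, ← Nat.sum_divisorsAntidiagonal (f := fun d x ↦ ((x : ℂ) - 1) * k d)]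
  refine sum_congr rfl ?_
  rintro ⟨a, x⟩ hax
  rw [Nat.mem_divisorsAntidiagonal] at hax
  obtain ⟨rfl, h0⟩ := hax
  simp only [ne_eq, mul_eq_zero, not_or] at h0
  rw [sum_const, Nat.card_Ico, nsmul_eq_mul, Nat.cast_sub (by omega)]
  simp

open Finset in
/-- A Liouville-type evaluation of a convolution sum whose summand is a coboundary. -/
lemma sum_bilinearSolutions_of_coboundary (g h : ℕ → ℕ → ℂ) (hg : ∀ a b, g a b = g b a)
    (hh : ∀ a b, h a b = h b a) (hgh : ∀ a b, h (a + b) b - h a b = g (a + b) b) (n : ℕ) :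
    ∑ s ∈ bilinearSolutions n, g s.1.1 s.2.1 =
      ∑ d ∈ n.divisors, (∑ a ∈ range d, h a (d - a) - (n / d : ℕ) * h 0 d) := by
  have tri (p q : (ℕ × ℕ) × (ℕ × ℕ) → ℕ) (f : (ℕ × ℕ) × (ℕ × ℕ) → ℂ) :
      ∑ s ∈ bilinearSolutions n, f s = ∑ s ∈ bilinearSolutions n with q s < p s, f s +
        ∑ s ∈ bilinearSolutions n with p s < q s, f s +
        ∑ s ∈ bilinearSolutions n with p s = q s, f s := by
    simp only [sum_filter, ← sum_add_distrib]
    refine sum_congr rfl fun s _ ↦ ?_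
    rcases lt_trichotomy (p s) (q s) with hs | hs | hs
    · simp [hs, hs.ne, hs.not_gt]
    · simp [hs]
    · simp [hs, hs.ne', hs.not_gt]
  have e1 := tri (fun s ↦ s.1.1) (fun s ↦ s.2.1) (fun s ↦ g s.1.1 s.2.1)
  have e2 := tri (fun s ↦ s.1.1) (fun s ↦ s.2.1) (fun s ↦ h s.1.1 s.2.1)
  have e3 := tri (fun s ↦ s.1.2) (fun s ↦ s.2.2) (fun s ↦ h s.1.1 s.2.1)
  have s1 : ∑ s ∈ bilinearSolutions n with s.1.1 < s.2.1, g s.1.1 s.2.1 =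
      ∑ s ∈ bilinearSolutions n with s.2.1 < s.1.1, g s.1.1 s.2.1 := by
    rw [sum_bilinearSolutions_swap]
    exact sum_congr rfl fun s _ ↦ hg _ _
  have s2 : ∑ s ∈ bilinearSolutions n with s.1.1 < s.2.1, h s.1.1 s.2.1 =
      ∑ s ∈ bilinearSolutions n with s.2.1 < s.1.1, h s.1.1 s.2.1 := by
    rw [sum_bilinearSolutions_swap]
    exact sum_congr rfl fun s _ ↦ hh _ _
  have s3 : ∑ s ∈ bilinearSolutions n with s.2.2 < s.1.2, h s.1.1 s.2.1 =
      ∑ s ∈ bilinearSolutions n with s.1.2 < s.2.2, h s.1.1 s.2.1 := by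
    rw [sum_bilinearSolutions_swap]
    exact sum_congr rfl fun s _ ↦ hh _ _
  have e4 : ∑ s ∈ bilinearSolutions n with s.2.1 < s.1.1, g s.1.1 s.2.1 =
      ∑ s ∈ bilinearSolutions n with s.2.1 < s.1.1, h s.1.1 s.2.1 -
      ∑ s ∈ bilinearSolutions n with s.2.1 < s.1.1, h (s.1.1 - s.2.1) s.2.1 := by
    rw [← sum_sub_distrib]
    refine sum_congr rfl fun s hs ↦ ?_
    have := hgh (s.1.1 - s.2.1) s.2.1
    rw [Nat.sub_add_cancel (mem_filter.mp hs).2.le] at this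
    exact this.symm
  have e5 : ∑ s ∈ bilinearSolutions n with s.1.1 = s.2.1, g s.1.1 s.2.1 =
      ∑ s ∈ bilinearSolutions n with s.1.1 = s.2.1, h s.1.1 s.2.1 -
      ∑ s ∈ bilinearSolutions n with s.1.1 = s.2.1, h 0 s.1.1 := by
    rw [← sum_sub_distrib]
    refine sum_congr rfl fun s hs ↦ ?_
    have := hgh 0 s.1.1
    rw [zero_add] at this
    rw [← (mem_filter.mp hs).2, this]
  have e6 : ∑ d ∈ n.divisors, (∑ a ∈ range d, h a (d - a) - (n / d : ℕ) * h 0 d) =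
      ∑ d ∈ n.divisors, ∑ a ∈ Ico 1 d, h a (d - a) -
      ∑ d ∈ n.divisors, ((n / d : ℕ) - 1 : ℂ) * h 0 d := by
    rw [← sum_sub_distrib]
    refine sum_congr rfl fun d hd ↦ ?_
    rw [range_eq_Ico, sum_eq_sum_Ico_succ_bot (Nat.pos_of_mem_divisors hd), Nat.sub_zero]
    ring
  rw [e6, ← sum_bilinearSolutions_diag, ← sum_bilinearSolutions_diag']
  rw [sum_bilinearSolutions_sub] at e4
  linear_combination e1 - e2 + e3 + s1 - s2 + s3 + 2 * e4 + e5

/-- The `5`-periodic weight with values `2, u, 5 - u, 5 - u, u`. -/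
noncomputable def rrWeight (u : ℂ) (n : ℕ) : ℂ :=
  if n % 5 = 0 then 2 else if n % 5 = 1 ∨ n % 5 = 4 then u else 5 - u

/-- Coefficient of `a ^ 2` in `rrKernel`. -/
noncomputable def rrCoeffSq (u : ℂ) (r s : ℕ) : ℂ :=
  if s = 0 then rrWeight u r else 6 / 5 * rrWeight u s

/-- Coefficient of `a * b` in `rrKernel`. -/
noncomputable def rrCoeffMul (u : ℂ) (r s : ℕ) : ℂ :=
  if r = 0 then rrWeight u s else if s = 0 then rrWeight u r
  else if (r + s) % 5 = 0 then 7 / 5 * rrWeight u r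
  else 6 / 5 * (rrWeight u r + rrWeight u s - rrWeight u (r + s))

/-- The quadratic form attached to the residue classes `r`, `s` modulo `5`. -/
noncomputable def rrForm (u : ℂ) (r s : ℕ) (x y : ℂ) : ℂ :=
  rrCoeffSq u r s * x ^ 2 + rrCoeffMul u r s * x * y + rrCoeffSq u s r * y ^ 2

/-- A symmetric quasi-polynomial with coboundary `a * b * rrWeight u a * rrWeight u b`. -/
noncomputable def rrKernel (u : ℂ) (a b : ℕ) : ℂ := rrForm u (a % 5) (b % 5) a b

lemma rrWeight_mod (u : ℂ) (n : ℕ) : rrWeight u (n % 5) = rrWeight u n := by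
  simp [rrWeight]

lemma rrKernel_comm (u : ℂ) (a b : ℕ) : rrKernel u a b = rrKernel u b a := by
  have ha : a % 5 < 5 := Nat.mod_lt _ (by norm_num)
  have hb : b % 5 < 5 := Nat.mod_lt _ (by norm_num)
  unfold rrKernel
  generalize a % 5 = r at *
  generalize b % 5 = s at *
  interval_cases r <;> interval_cases s <;>
    simp [rrForm, rrCoeffSq, rrCoeffMul, rrWeight] <;> ring

lemma rrKernel_coboundary {u : ℂ} (hu : u ^ 2 - 5 * u + 6 = 0) (a b : ℕ) :
    rrKernel u (a + b) b - rrKernel u a b =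
      ((a + b : ℕ) * rrWeight u (a + b)) * (b * rrWeight u b) := by
  have ha : a % 5 < 5 := Nat.mod_lt _ (by norm_num)
  have hb : b % 5 < 5 := Nat.mod_lt _ (by norm_num)
  rw [← rrWeight_mod u (a + b), ← rrWeight_mod u b]
  unfold rrKernel
  rw [Nat.add_mod]
  push_cast
  generalize a % 5 = r at *
  generalize b % 5 = s at *
  interval_cases r <;> interval_cases s <;>
    simp [rrForm, rrCoeffSq, rrCoeffMul, rrWeight] <;>
    first
    | ring1
    | linear_combination (a + b : ℂ) * b * hu
    | linear_combination -(a + b : ℂ) * b * hu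

lemma sum_range_rrForm (u D : ℂ) (r k : ℕ) :
    ∑ a ∈ Finset.range (5 * (k + 1)), rrForm u (a % 5) ((r + 5 - a % 5) % 5) a (D - a) =
      ∑ a ∈ Finset.range (5 * k), rrForm u (a % 5) ((r + 5 - a % 5) % 5) a (D - a) +
      (rrForm u 0 ((r + 5) % 5) (5 * k) (D - 5 * k) +
      rrForm u 1 ((r + 4) % 5) (5 * k + 1) (D - (5 * k + 1)) +
      rrForm u 2 ((r + 3) % 5) (5 * k + 2) (D - (5 * k + 2)) +
      rrForm u 3 ((r + 2) % 5) (5 * k + 3) (D - (5 * k + 3)) +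
      rrForm u 4 ((r + 1) % 5) (5 * k + 4) (D - (5 * k + 4))) := by
  rw [mul_add, mul_one]
  simp only [Finset.sum_range_succ, Nat.mul_add_mod, Nat.mul_mod_right]
  push_cast
  norm_num
  ring

lemma sum_rrKernel {u : ℂ} (hu : u ^ 2 - 5 * u + 6 = 0) (d : ℕ) :
    ∑ a ∈ Finset.range d, rrKernel u a (d - a) + (5 - 2 * u) / 5 * (d * rrWeight u d) =
      12 / 5 * d ^ 3 := by
  have hd : ∑ a ∈ Finset.range d, rrKernel u a (d - a) =
      ∑ a ∈ Finset.range d, rrForm u (a % 5) ((d % 5 + 5 - a % 5) % 5) a ((d : ℂ) - a) := by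
    refine Finset.sum_congr rfl fun a ha ↦ ?_
    have ha := (Finset.mem_range.mp ha).le
    rw [rrKernel, Nat.cast_sub ha, show (d - a) % 5 = (d % 5 + 5 - a % 5) % 5 by omega]
  have aux (r : ℕ) (D : ℂ) (P : ℕ → ℂ) (h0 : P 0 = 0)
      (hP : ∀ k : ℕ, P (k + 1) = P k + (rrForm u 0 ((r + 5) % 5) (5 * k) (D - 5 * k) +
        rrForm u 1 ((r + 4) % 5) (5 * k + 1) (D - (5 * k + 1)) +
        rrForm u 2 ((r + 3) % 5) (5 * k + 2) (D - (5 * k + 2)) +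
        rrForm u 3 ((r + 2) % 5) (5 * k + 3) (D - (5 * k + 3)) +
        rrForm u 4 ((r + 1) % 5) (5 * k + 4) (D - (5 * k + 4)))) (k : ℕ) :
      ∑ a ∈ Finset.range (5 * k), rrForm u (a % 5) ((r + 5 - a % 5) % 5) a (D - a) = P k := by
    induction k with
    | zero => simp [h0]
    | succ k ih => rw [sum_range_rrForm, ih, hP]
  rw [hd, ← rrWeight_mod u d]
  obtain ⟨k, r, hr, rfl⟩ : ∃ k r, r < 5 ∧ d = 5 * k + r :=
    ⟨d / 5, d % 5, Nat.mod_lt _ (by norm_num), (Nat.div_add_mod d 5).symm⟩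
  rw [Nat.mul_add_mod, Nat.mod_eq_of_lt hr]
  set D : ℂ := ((5 * k + r : ℕ) : ℂ) with hD
  have hk (P : ℕ → ℂ) (h0) (hP) := aux r D P h0 hP k
  interval_cases r
  · rw [add_zero, hk (fun k ↦ (4 * u - 10) * k + 5 * k * D + 14 * k * D ^ 2 - 25 * k ^ 2 -
      30 * k ^ 2 * D + 100 * k ^ 3) (by simp)
      (fun k ↦ by simp [rrForm, rrCoeffSq, rrCoeffMul, rrWeight]; ring)]
    simp [rrWeight, hD]
    ring
  · simp only [Finset.sum_range_succ]
    rw [hk (fun k ↦ u * k + (12 - 2 * u) * k * D + (12 + u) * k * D ^ 2 - 15 * u * k ^ 2 -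
      15 * u * k ^ 2 * D + 50 * u * k ^ 3) (by simp)
      (fun k ↦ by simp [rrForm, rrCoeffSq, rrCoeffMul, rrWeight]; ring)]
    simp [rrForm, rrCoeffSq, rrCoeffMul, rrWeight, hD]
    linear_combination -2 / 5 * (5 * k + 1 : ℂ) * hu
  · simp only [Finset.sum_range_succ]
    rw [hk (fun k ↦ (5 - u) * k + (19 - 5 * u) * k * D + (17 - u) * k * D ^ 2 -
      15 * (5 - u) * k ^ 2 - 15 * (5 - u) * k ^ 2 * D + 50 * (5 - u) * k ^ 3) (by simp)
      (fun k ↦ by simp [rrForm, rrCoeffSq, rrCoeffMul, rrWeight]; ring)]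
    simp [rrForm, rrCoeffSq, rrCoeffMul, rrWeight, hD]
    linear_combination 2 / 5 * (5 * k + 2 : ℂ) * hu
  · simp only [Finset.sum_range_succ]
    rw [hk (fun k ↦ (5 - u) * k + 6 * k * D + (17 - u) * k * D ^ 2 -
      15 * (5 - u) * k ^ 2 - 15 * (5 - u) * k ^ 2 * D + 50 * (5 - u) * k ^ 3) (by simp)
      (fun k ↦ by simp [rrForm, rrCoeffSq, rrCoeffMul, rrWeight]; ring)]
    simp [rrForm, rrCoeffSq, rrCoeffMul, rrWeight, hD]
    linear_combination 2 / 5 * (5 * k + 3 : ℂ) * hu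
  · simp only [Finset.sum_range_succ]
    rw [hk (fun k ↦ u * k + (7 * u - 12) * k * D + (12 + u) * k * D ^ 2 - 15 * u * k ^ 2 -
      15 * u * k ^ 2 * D + 50 * u * k ^ 3) (by simp)
      (fun k ↦ by simp [rrForm, rrCoeffSq, rrCoeffMul, rrWeight]; ring)]
    simp [rrForm, rrCoeffSq, rrCoeffMul, rrWeight, hD]
    linear_combination -2 / 5 * (5 * k + 4 : ℂ) * hu

lemma rrKernel_zero_left (u : ℂ) (d : ℕ) : rrKernel u 0 d = d * (d * rrWeight u d) := by
  rw [← rrWeight_mod]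
  by_cases h : d % 5 = 0 <;> simp [rrKernel, rrForm, rrCoeffSq, h] <;> ring

/-- Convolution identity equivalent to the Riccati equation for the level `5` Eisenstein series. -/
lemma sum_antidiagonal_rrWeight {u : ℂ} (hu : u ^ 2 - 5 * u + 6 = 0) (n : ℕ) :
    ∑ p ∈ Finset.HasAntidiagonal.antidiagonal n, (∑ d ∈ p.1.divisors, (d : ℂ) * rrWeight u d) *
        (∑ d ∈ p.2.divisors, (d : ℂ) * rrWeight u d) =
      12 / 5 * ∑ d ∈ n.divisors, (d : ℂ) ^ 3 -
        (n + (5 - 2 * u) / 5) * ∑ d ∈ n.divisors, (d : ℂ) * rrWeight u d := by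
  rw [sum_antidiagonal_divisors_mul, sum_bilinearSolutions_of_coboundary
    (fun a b ↦ (a * rrWeight u a) * (b * rrWeight u b)) (rrKernel u) (fun a b ↦ mul_comm _ _)
    (rrKernel_comm u) (rrKernel_coboundary hu), Finset.mul_sum, Finset.mul_sum,
    ← Finset.sum_sub_distrib]
  refine Finset.sum_congr rfl fun d hd ↦ ?_
  have hn : ((n / d : ℕ) : ℂ) * d = n := by
    exact_mod_cast Nat.div_mul_cancel (Nat.dvd_of_mem_divisors hd)
  rw [rrKernel_zero_left]
  linear_combination sum_rrKernel hu d - d * rrWeight u d * hn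

/-- Convolution identity equivalent to Ramanujan's differential equation for `E₂`. -/
lemma sum_antidiagonal_divisors (n : ℕ) :
    ∑ p ∈ Finset.HasAntidiagonal.antidiagonal n,
        (∑ d ∈ p.1.divisors, (d : ℂ)) * (∑ d ∈ p.2.divisors, (d : ℂ)) =
      5 / 12 * ∑ d ∈ n.divisors, (d : ℂ) ^ 3 - (n / 2 - 1 / 12) * ∑ d ∈ n.divisors, (d : ℂ) := by
  rw [sum_antidiagonal_divisors_mul, sum_bilinearSolutions_of_coboundary
    (fun a b ↦ (a * b : ℂ)) (fun a b ↦ ((a : ℂ) ^ 2 + a * b + b ^ 2) / 2) (fun a b ↦ mul_comm _ _)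
    (fun a b ↦ by ring) (fun a b ↦ by push_cast; ring), Finset.mul_sum, Finset.mul_sum,
    ← Finset.sum_sub_distrib]
  refine Finset.sum_congr rfl fun d hd ↦ ?_
  have hn : ((n / d : ℕ) : ℂ) * d = n := by
    exact_mod_cast Nat.div_mul_cancel (Nat.dvd_of_mem_divisors hd)
  have key (D : ℂ) (m : ℕ) : ∑ a ∈ Finset.range m, ((a : ℂ) ^ 2 + a * (D - a) + (D - a) ^ 2) / 2 =
      m * D ^ 2 / 2 - m * (m - 1) * D / 4 + m * (m - 1) * (2 * m - 1) / 12 := by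
    induction m with
    | zero => simp
    | succ m ih => rw [Finset.sum_range_succ, ih]; push_cast; ring
  have hd' : ∑ a ∈ Finset.range d, ((a : ℂ) ^ 2 + a * (d - a : ℕ) + (d - a : ℕ) ^ 2) / 2 =
      ∑ a ∈ Finset.range d, ((a : ℂ) ^ 2 + a * (d - a) + (d - a) ^ 2) / 2 :=
    Finset.sum_congr rfl fun a ha ↦ by rw [Nat.cast_sub (Finset.mem_range.mp ha).le]
  rw [hd', key, ← hn]
  push_cast
  ring

/-- Polynomial growth of a sequence of complex numbers. -/
def PolyBounded (a : ℕ → ℂ) : Prop := ∃ (C : ℝ) (k : ℕ), ∀ n, ‖a n‖ ≤ C * (n : ℝ) ^ k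

lemma PolyBounded.summable_norm {a : ℕ → ℂ} (ha : PolyBounded a) {q : ℂ} (hq : ‖q‖ < 1) :
    Summable fun n ↦ ‖a n * q ^ n‖ := by
  obtain ⟨C, k, h⟩ := ha
  have hs := (summable_pow_mul_geometric_of_norm_lt_one k (r := ‖q‖) (by simpa using hq)).mul_left C
  refine hs.of_nonneg_of_le (fun _ ↦ norm_nonneg _) fun n ↦ ?_
  rw [norm_mul, norm_pow, ← mul_assoc]
  exact mul_le_mul_of_nonneg_right (h n) (by positivity)

lemma PolyBounded.summable {a : ℕ → ℂ} (ha : PolyBounded a) {q : ℂ} (hq : ‖q‖ < 1) :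
    Summable fun n ↦ a n * q ^ n :=
  (ha.summable_norm hq).of_norm

lemma PolyBounded.of_le {a : ℕ → ℂ} {b : ℕ → ℂ} (ha : PolyBounded a) (h : ∀ n, ‖b n‖ ≤ ‖a n‖) :
    PolyBounded b :=
  let ⟨C, k, hC⟩ := ha
  ⟨C, k, fun n ↦ (h n).trans (hC n)⟩

lemma PolyBounded.natCast_mul {a : ℕ → ℂ} (ha : PolyBounded a) :
    PolyBounded fun n ↦ n * a n := by
  obtain ⟨C, k, h⟩ := ha
  refine ⟨C, k + 1, fun n ↦ ?_⟩
  rw [norm_mul, norm_natCast, pow_succ, ← mul_assoc, mul_comm]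
  exact mul_le_mul_of_nonneg_right (h n) (by positivity)

lemma PolyBounded.sum_divisors {a : ℕ → ℂ} (ha : PolyBounded a) :
    PolyBounded fun n ↦ ∑ d ∈ n.divisors, a d := by
  obtain ⟨C, k, h⟩ := ha
  refine ⟨|C|, k + 1, fun n ↦ ?_⟩
  have hd (d) (hd : d ∈ n.divisors) : ‖a d‖ ≤ |C| * (n : ℝ) ^ k := by
    have : (d : ℝ) ≤ n := by exact_mod_cast Nat.divisor_le hd
    refine (h d).trans ?_
    gcongr
    exact le_abs_self C
  refine (norm_sum_le_of_le _ hd).trans ?_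
  have hcard : (n.divisors.card : ℝ) ≤ n := by exact_mod_cast Nat.card_divisors_le_self n
  rw [Finset.sum_const, nsmul_eq_mul]
  calc (n.divisors.card : ℝ) * (|C| * (n : ℝ) ^ k) ≤ n * (|C| * (n : ℝ) ^ k) := by gcongr
    _ = |C| * (n : ℝ) ^ (k + 1) := by ring

lemma norm_cexp_two_pi_I_mul_lt_one {τ : ℂ} (hτ : 0 < τ.im) :
    ‖Complex.exp (2 * π * I * τ)‖ < 1 := by
  rw [Complex.norm_exp, Real.exp_lt_one_iff]
  simp
  positivity

lemma PolyBounded.hasDerivAt {a : ℕ → ℂ} (ha : PolyBounded a) {q : ℂ} (hq : ‖q‖ < 1) :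
    HasDerivAt (fun z ↦ ∑' n, a n * z ^ n) (∑' n, a n * (n * q ^ (n - 1))) q := by
  obtain ⟨r, hqr, hr⟩ := exists_between hq
  have hr0 : 0 < r := (norm_nonneg q).trans_lt hqr
  have hu : Summable fun n : ℕ ↦ ‖n * a n * (r : ℂ) ^ n‖ * r⁻¹ :=
    (ha.natCast_mul.summable_norm (by simpa [abs_of_pos hr0] using hr)).mul_right _
  refine hasDerivAt_tsum_of_isPreconnected hu Metric.isOpen_ball
    (convex_ball (0 : ℂ) r).isPreconnected
    (fun n y _ ↦ (hasDerivAt_pow n y).const_mul (a n)) (fun n y hy ↦ ?_)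
    (Metric.mem_ball_self hr0) (ha.summable (by simp)) (by simpa using hqr)
  rcases n with _ | n
  · simp
  · have hy : ‖y‖ ≤ r := (mem_ball_zero_iff.mp hy).le
    simp only [norm_mul, norm_pow, Nat.add_sub_cancel, norm_real, Real.norm_of_nonneg hr0.le]
    calc ‖a (n + 1)‖ * (‖((n + 1 : ℕ) : ℂ)‖ * ‖y‖ ^ n)
        ≤ ‖a (n + 1)‖ * (‖((n + 1 : ℕ) : ℂ)‖ * r ^ n) := by gcongr
      _ = ‖((n + 1 : ℕ) : ℂ)‖ * ‖a (n + 1)‖ * r ^ (n + 1) * r⁻¹ := by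
        field_simp
        ring

lemma PolyBounded.hasDerivAt_comp_cexp {a : ℕ → ℂ} (ha : PolyBounded a) {τ : ℂ} (hτ : 0 < τ.im) :
    HasDerivAt (fun τ : ℂ ↦ ∑' n, a n * Complex.exp (2 * π * I * τ) ^ n)
      (2 * π * I * ∑' n, n * a n * Complex.exp (2 * π * I * τ) ^ n) τ := by
  have h1 : HasDerivAt (fun τ : ℂ ↦ Complex.exp (2 * π * I * τ))
      (Complex.exp (2 * π * I * τ) * (2 * π * I)) τ := by
    simpa using ((hasDerivAt_id τ).const_mul (2 * π * I : ℂ)).cexp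
  refine ((ha.hasDerivAt (norm_cexp_two_pi_I_mul_lt_one hτ)).comp τ h1).congr_deriv ?_
  rw [← tsum_mul_left, ← tsum_mul_right]
  refine tsum_congr fun n ↦ ?_
  rcases n with _ | n
  · simp
  · simp only [Nat.add_sub_cancel]
    ring

lemma hasSum_neg_log_one_sub_pow {χ : ℕ → ℂ} (hχ : ∀ n, ‖χ n‖ ≤ 1) {q : ℂ} (hq : ‖q‖ < 1) :
    HasSum (fun m : ℕ ↦ χ m * -log (1 - q ^ m))
      (∑' n : ℕ, (∑ d ∈ n.divisors, d * χ d) / n * q ^ n) := by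
  let F : ℕ+ × ℕ+ → ℂ := fun p ↦ χ p.1 * (q ^ (p.1 * p.2 : ℕ) / p.2)
  have hF : Summable F := by
    refine .of_norm_bounded (summable_prod_mul_pow 0 (r := ‖q‖) (by simpa using hq)) fun p ↦ ?_
    have hp : (1 : ℝ) ≤ (p.2 : ℕ) := by exact_mod_cast p.2.pos
    simp only [F, norm_mul, norm_div, norm_pow, norm_natCast, pow_zero]
    gcongr
    · exact hχ _
    · exact div_le_self (by positivity) hp
  have h1 (m : ℕ+) : HasSum (fun k ↦ F (m, k)) (χ m * -log (1 - q ^ (m : ℕ))) := by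
    have hm : ‖q ^ (m : ℕ)‖ < 1 := by
      rw [norm_pow]; exact pow_lt_one₀ (norm_nonneg _) hq m.ne_zero
    have h0 := (hasSum_taylorSeries_neg_log hm).mul_left (χ m)
    simpa [F, pow_mul] using (hasSum_pnat_iff (f := fun k ↦ χ m * ((q ^ (m : ℕ)) ^ k / k))
      (a := χ m * -log (1 - q ^ (m : ℕ)))).mpr (by simpa using h0)
  have h2 := hF.hasSum.prod_fiberwise h1
  have h3 (n : ℕ+) : HasSum (fun c : {x // x ∈ (n : ℕ).divisorsAntidiagonal} ↦
      F (sigmaAntidiagonalEquivProd ⟨n, c⟩))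
      ((∑ d ∈ (n : ℕ).divisors, d * χ d) / n * q ^ (n : ℕ)) := by
    have h := hasSum_fintype fun c : {x // x ∈ (n : ℕ).divisorsAntidiagonal} ↦
      F (sigmaAntidiagonalEquivProd ⟨n, c⟩)
    convert h using 1
    simp only [F, sigmaAntidiagonalEquivProd, divisorsAntidiagonalFactors, PNat.mk_coe,
      Equiv.coe_fn_mk, Finset.univ_eq_attach]
    rw [(n : ℕ).divisorsAntidiagonal.sum_attach fun x : ℕ × ℕ ↦
        χ x.1 * (q ^ (x.1 * x.2) / x.2),
      Nat.sum_divisorsAntidiagonal fun x y ↦ χ x * (q ^ (x * y) / y),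
      Finset.sum_div, Finset.sum_mul]
    refine Finset.sum_congr rfl fun d hd ↦ ?_
    have hdn := Nat.dvd_of_mem_divisors hd
    have hd0 : (d : ℂ) ≠ 0 := by
      exact_mod_cast (Nat.pos_of_mem_divisors hd).ne'
    have hn0 : (n : ℂ) ≠ 0 := by exact_mod_cast n.ne_zero
    rw [Nat.mul_div_cancel' hdn, Nat.cast_div hdn hd0]
    field_simp
  have h4 := (sigmaAntidiagonalEquivProd.hasSum_iff.mpr hF.hasSum).sigma h3
  rw [hasSum_pnat_iff (f := fun m ↦ χ m * -log (1 - q ^ m))] at h2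
  rw [hasSum_pnat_iff
    (f := fun n : ℕ ↦ (∑ d ∈ n.divisors, d * χ d) / n * q ^ n)] at h4
  simp only [pow_zero, sub_self, log_zero, neg_zero, mul_zero, add_zero, Nat.divisors_zero,
    Finset.sum_empty, zero_div, zero_mul] at h2 h4
  rwa [h4.tsum_eq]

lemma hasProd_one_sub_pow_inv {q : ℂ} (hq : ‖q‖ < 1) {r : ℕ} (hr0 : r ≠ 0) (hr : r < 5) :
    HasProd (fun n : ℕ ↦ (1 - q ^ (5 * n + r))⁻¹)
      (Complex.exp (∑' n : ℕ, (∑ d ∈ n.divisors, d * if d % 5 = r then (1 : ℂ) else 0) / n *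
        q ^ n)) := by
  have h := hasSum_neg_log_one_sub_pow (χ := fun d ↦ if d % 5 = r then (1 : ℂ) else 0)
    (fun n ↦ by split_ifs <;> simp) hq
  have hinj : Function.Injective fun n : ℕ ↦ 5 * n + r := fun a b hab ↦ by
    simp only at hab; omega
  rw [← hinj.hasSum_iff] at h
  · convert h.cexp using 2 with n
    have hn : ‖q ^ (5 * n + r)‖ < 1 := by
      rw [norm_pow]; exact pow_lt_one₀ (norm_nonneg _) hq (by omega)
    have hne : 1 - q ^ (5 * n + r) ≠ 0 := fun h0 ↦ by
      rw [← sub_eq_zero.mp h0] at hn; simp at hn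
    simp [Nat.mod_eq_of_lt hr, Complex.exp_neg, Complex.exp_log hne]
  · intro m hm
    have : m % 5 ≠ r := fun h ↦ hm ⟨m / 5, by simp only; omega⟩
    simp [this]

lemma tsum_mul_self_eq {a c : ℕ → ℂ} (ha : PolyBounded a)
    (h : ∀ n, ∑ p ∈ Finset.HasAntidiagonal.antidiagonal n, a p.1 * a p.2 = c n) {q : ℂ}
    (hq : ‖q‖ < 1) : (∑' n, a n * q ^ n) ^ 2 = ∑' n, c n * q ^ n := by
  rw [sq, tsum_mul_tsum_eq_tsum_sum_antidiagonal_of_summable_norm (ha.summable_norm hq)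
    (ha.summable_norm hq)]
  refine tsum_congr fun n ↦ ?_
  rw [← h, Finset.sum_mul]
  refine Finset.sum_congr rfl fun p hp ↦ ?_
  rw [← Finset.HasAntidiagonal.mem_antidiagonal.mp hp, pow_add]
  ring

lemma polyBounded_pow (k : ℕ) : PolyBounded fun n ↦ (n : ℂ) ^ k :=
  ⟨1, k, fun n ↦ by simp⟩

lemma polyBounded_natCast : PolyBounded fun n ↦ (n : ℂ) := by
  simpa using polyBounded_pow 1

/-- Ramanujan's differential equation for the Eisenstein series of weight two. -/
lemma tsum_sigma_one_sq {q : ℂ} (hq : ‖q‖ < 1) :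
    (∑' n : ℕ, (∑ d ∈ n.divisors, (d : ℂ)) * q ^ n) ^ 2 =
      5 / 12 * ∑' n : ℕ, (∑ d ∈ n.divisors, (d : ℂ) ^ 3) * q ^ n -
      1 / 2 * ∑' n : ℕ, n * (∑ d ∈ n.divisors, (d : ℂ)) * q ^ n +
      1 / 12 * ∑' n : ℕ, (∑ d ∈ n.divisors, (d : ℂ)) * q ^ n := by
  have hs := polyBounded_natCast.sum_divisors
  have h1 := (hs.summable hq).mul_left (1 / 12)
  have h2 := (hs.natCast_mul.summable hq).mul_left (1 / 2)
  have h3 := ((polyBounded_pow 3).sum_divisors.summable hq).mul_left (5 / 12)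
  rw [tsum_mul_self_eq hs sum_antidiagonal_divisors hq, ← tsum_mul_left, ← tsum_mul_left,
    ← tsum_mul_left, ← h3.tsum_sub h2, ← (h3.sub h2).tsum_add h1]
  exact tsum_congr fun n ↦ by ring

/-- The Riccati equation satisfied by the logarithmic derivatives of the characters. -/
lemma riccati_of_rrWeight {u : ℂ} (hu : u ^ 2 - 5 * u + 6 = 0) {χ : ℕ → ℂ}
    (hχ : ∀ d, rrWeight u d = 2 + χ d) (hb : PolyBounded fun n ↦ ∑ d ∈ n.divisors, d * χ d)
    {q κ : ℂ} (hκ : κ = (5 - 2 * u) / 10 + 1 / 12) (hq : ‖q‖ < 1) :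
    ∑' n : ℕ, n * (∑ d ∈ n.divisors, d * χ d) * q ^ n +
      (κ + ∑' n : ℕ, (∑ d ∈ n.divisors, d * χ d) * q ^ n) ^ 2 +
      2 * (-(1 / 12) + 2 * ∑' n : ℕ, (∑ d ∈ n.divisors, (d : ℂ)) * q ^ n) *
        (κ + ∑' n : ℕ, (∑ d ∈ n.divisors, d * χ d) * q ^ n) -
      11 / 5 * (1 / 720 + 1 / 3 * ∑' n : ℕ, (∑ d ∈ n.divisors, (d : ℂ) ^ 3) * q ^ n) = 0 := by
  have hs := polyBounded_natCast.sum_divisors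
  have hσ := (polyBounded_pow 3).sum_divisors.summable hq
  have hsplit (n : ℕ) : ∑ d ∈ n.divisors, (d : ℂ) * rrWeight u d =
      2 * ∑ d ∈ n.divisors, (d : ℂ) + ∑ d ∈ n.divisors, d * χ d := by
    rw [Finset.mul_sum, ← Finset.sum_add_distrib]
    exact Finset.sum_congr rfl fun d _ ↦ by rw [hχ]; ring
  have ha : PolyBounded fun n ↦ ∑ d ∈ n.divisors, (d : ℂ) * rrWeight u d := by
    refine PolyBounded.sum_divisors (PolyBounded.natCast_mul
      ⟨2 + ‖u‖ + ‖5 - u‖, 0, fun n ↦ ?_⟩)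
    have := norm_nonneg u
    have := norm_nonneg (5 - u)
    unfold rrWeight
    split_ifs <;> simp <;> linarith
  have key := tsum_mul_self_eq ha (sum_antidiagonal_rrWeight hu) hq
  have e1 : ∑' n : ℕ, (∑ d ∈ n.divisors, (d : ℂ) * rrWeight u d) * q ^ n =
      2 * ∑' n : ℕ, (∑ d ∈ n.divisors, (d : ℂ)) * q ^ n +
      ∑' n : ℕ, (∑ d ∈ n.divisors, d * χ d) * q ^ n := by
    rw [← tsum_mul_left, ← ((hs.summable hq).mul_left 2).tsum_add (hb.summable hq)]
    exact tsum_congr fun n ↦ by rw [hsplit]; ring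
  have e2 : ∑' n : ℕ, n * (∑ d ∈ n.divisors, (d : ℂ) * rrWeight u d) * q ^ n =
      2 * ∑' n : ℕ, n * (∑ d ∈ n.divisors, (d : ℂ)) * q ^ n +
      ∑' n : ℕ, n * (∑ d ∈ n.divisors, d * χ d) * q ^ n := by
    rw [← tsum_mul_left, ← ((hs.natCast_mul.summable hq).mul_left 2).tsum_add
      (hb.natCast_mul.summable hq)]
    exact tsum_congr fun n ↦ by rw [hsplit]; ring
  have e3 : ∑' n : ℕ, (12 / 5 * ∑ d ∈ n.divisors, (d : ℂ) ^ 3 -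
        (n + (5 - 2 * u) / 5) * ∑ d ∈ n.divisors, (d : ℂ) * rrWeight u d) * q ^ n =
      12 / 5 * ∑' n : ℕ, (∑ d ∈ n.divisors, (d : ℂ) ^ 3) * q ^ n -
      ∑' n : ℕ, n * (∑ d ∈ n.divisors, (d : ℂ) * rrWeight u d) * q ^ n -
      (5 - 2 * u) / 5 * ∑' n : ℕ, (∑ d ∈ n.divisors, (d : ℂ) * rrWeight u d) * q ^ n := by
    have h1 := hσ.mul_left (12 / 5)
    have h2 := ha.natCast_mul.summable hq
    have h3 := (ha.summable hq).mul_left ((5 - 2 * u) / 5)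
    rw [← tsum_mul_left, ← tsum_mul_left, ← h1.tsum_sub h2, ← (h1.sub h2).tsum_sub h3]
    exact tsum_congr fun n ↦ by ring
  rw [e3, e2, e1] at key
  subst hκ
  linear_combination key - 4 * tsum_sigma_one_sq hq + 1 / 25 * hu

/-- The modified character `q ^ κ * ∏ 1 / ((1 - q ^ (5 n + r)) (1 - q ^ (5 n + s)))` satisfies the
second-order equation whenever the weights attached to `r` and `s` match `rrWeight u`. -/
lemma character_ode {u : ℂ} (hu : u ^ 2 - 5 * u + 6 = 0) {r s : ℕ} (hr0 : r ≠ 0) (hr : r < 5)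
    (hs0 : s ≠ 0) (hs : s < 5)
    (hχ : ∀ d, rrWeight u d =
      2 + ((if d % 5 = r then (1 : ℂ) else 0) + if d % 5 = s then (1 : ℂ) else 0))
    {κ : ℂ} (hκ : κ = (5 - 2 * u) / 10 + 1 / 12) {y : ℂ → ℂ}
    (hy : y = fun τ : ℂ ↦ Complex.exp (2 * π * I * τ * κ) *
      ∏' n : ℕ, ((1 - Complex.exp (2 * π * I * τ) ^ (5 * n + r))
        * (1 - Complex.exp (2 * π * I * τ) ^ (5 * n + s)))⁻¹)
    {D : (ℂ → ℂ) → (ℂ → ℂ)} (hD : D = fun f => fun τ => (2 * π * I)⁻¹ * deriv f τ)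
    {τ : ℂ} (hτ : 0 < τ.im) :
    D (D y) τ + 2 * (-(1 / 12) + 2 * ∑' n : ℕ, (∑ d ∈ (n + 1).divisors, (d : ℂ)) *
        Complex.exp (2 * π * I * τ) ^ (n + 1)) * D y τ -
      11 / 5 * (1 / 720 + 1 / 3 * ∑' n : ℕ, (∑ d ∈ (n + 1).divisors, (d : ℂ) ^ 3) *
        Complex.exp (2 * π * I * τ) ^ (n + 1)) * y τ = 0 := by
  set χ : ℕ → ℂ := fun d ↦ (if d % 5 = r then (1 : ℂ) else 0) + if d % 5 = s then (1 : ℂ) else 0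
    with hχ_def
  have hbd (t : ℕ) : PolyBounded fun n ↦
      ∑ d ∈ n.divisors, d * if d % 5 = t then (1 : ℂ) else 0 :=
    PolyBounded.sum_divisors (PolyBounded.natCast_mul
      ⟨1, 0, fun n ↦ by dsimp only; split_ifs <;> simp⟩)
  have hb : PolyBounded fun n ↦ ∑ d ∈ n.divisors, d * χ d :=
    PolyBounded.sum_divisors (PolyBounded.natCast_mul
      ⟨2, 0, fun n ↦ by simp only [hχ_def]; split_ifs <;> norm_num⟩)
  have hdiv {b : ℕ → ℂ} (hb : PolyBounded b) : PolyBounded fun n ↦ b n / n :=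
    hb.of_le fun n ↦ by
      rcases n with _ | n
      · simp
      · rw [norm_div, Complex.norm_natCast]
        exact div_le_self (norm_nonneg _) (by simp)
  have hy' {τ : ℂ} (hτ : 0 < τ.im) : y τ = Complex.exp (2 * π * I * τ * κ +
      ∑' n : ℕ, (∑ d ∈ n.divisors, d * χ d) / n * Complex.exp (2 * π * I * τ) ^ n) := by
    have hq := norm_cexp_two_pi_I_mul_lt_one hτ
    have hprod := (hasProd_one_sub_pow_inv hq hr0 hr).mul (hasProd_one_sub_pow_inv hq hs0 hs)
    simp only [← mul_inv] at hprod
    rw [Complex.exp_add, congrFun hy τ, hprod.tprod_eq, ← Complex.exp_add,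
      ← ((hdiv (hbd r)).summable hq).tsum_add ((hdiv (hbd s)).summable hq)]
    congr 2
    refine tsum_congr fun n ↦ ?_
    simp only [hχ_def, mul_add, Finset.sum_add_distrib]
    ring
  have hopen : IsOpen {τ : ℂ | 0 < τ.im} := isOpen_lt continuous_const continuous_im
  have hpi : (2 * π * I : ℂ) ≠ 0 := two_pi_I_ne_zero
  set L : ℂ → ℂ := fun τ ↦
    κ + ∑' n : ℕ, (∑ d ∈ n.divisors, d * χ d) * Complex.exp (2 * π * I * τ) ^ n with hL
  have hyd {τ : ℂ} (hτ : 0 < τ.im) : HasDerivAt y (2 * π * I * (L τ * y τ)) τ := by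
    have h1 : HasDerivAt (fun τ : ℂ ↦ 2 * π * I * τ * κ) (2 * π * I * κ) τ := by
      simpa using ((hasDerivAt_id τ).const_mul (2 * π * I : ℂ)).mul_const κ
    have h2 := (h1.add ((hdiv hb).hasDerivAt_comp_cexp hτ)).cexp
    have h3 := h2.congr_of_eventuallyEq
      (Filter.eventuallyEq_of_mem (hopen.mem_nhds hτ) fun τ hτ ↦ hy' hτ)
    refine h3.congr_deriv ?_
    have h4 : ∑' n : ℕ, n * ((∑ d ∈ n.divisors, d * χ d) / n) * Complex.exp (2 * π * I * τ) ^ n =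
        ∑' n : ℕ, (∑ d ∈ n.divisors, d * χ d) * Complex.exp (2 * π * I * τ) ^ n := by
      refine tsum_congr fun n ↦ ?_
      rcases n with _ | n
      · simp
      · rw [mul_div_cancel₀ _ (by exact_mod_cast n.succ_ne_zero)]
    rw [hy' hτ, hL, h4]
    simp only [Pi.add_apply]
    ring
  have hDy {τ : ℂ} (hτ : 0 < τ.im) : D y τ = L τ * y τ := by
    rw [hD]
    simp only
    rw [(hyd hτ).deriv, inv_mul_cancel_left₀ hpi]
  have hDDy : D (D y) τ = (∑' n : ℕ, n * (∑ d ∈ n.divisors, d * χ d) *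
      Complex.exp (2 * π * I * τ) ^ n + L τ ^ 2) * y τ := by
    have h1 := ((hb.hasDerivAt_comp_cexp hτ).const_add κ).mul (hyd hτ)
    have h2 : HasDerivAt (D y) _ τ := h1.congr_of_eventuallyEq
      (Filter.eventuallyEq_of_mem (hopen.mem_nhds hτ) fun τ hτ ↦ hDy hτ)
    rw [congrFun (congrFun hD (D y)) τ, h2.deriv]
    simp only [hL]
    field_simp
  have hq := norm_cexp_two_pi_I_mul_lt_one hτ
  have hshift {b : ℕ → ℂ} (hb : PolyBounded b) :
      ∑' n : ℕ, (∑ d ∈ (n + 1).divisors, b d) * Complex.exp (2 * π * I * τ) ^ (n + 1) =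
      ∑' n : ℕ, (∑ d ∈ n.divisors, b d) * Complex.exp (2 * π * I * τ) ^ n := by
    rw [(hb.sum_divisors.summable hq).tsum_eq_zero_add]
    simp
  rw [hshift polyBounded_natCast, hshift (polyBounded_pow 3), hDDy, hDy hτ]
  linear_combination y τ * riccati_of_rrWeight hu hχ hb hκ hq

/-- Both modified `c = -22/5` characters `y₁ = q^{11/60}∏ 1/((1-q^{5n+2})(1-q^{5n+3}))`
and `y₂ = q^{-1/60}∏ 1/((1-q^{5n+1})(1-q^{5n+4}))` (as functions of `τ`, `q = e^{2πiτ}`,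
with `' = (2πi)⁻¹ d/dτ = q d/dq`) satisfy
`F'' + 2Ẽ₂(q)F' - (11/5)Ẽ₄(q)F = 0`. -/
theorem RR_characters_ODE (y₁ y₂ : ℂ → ℂ)
    (hy₁ : y₁ = fun τ : ℂ => Complex.exp (2 * π * I * τ * (11 / 60)) *
      ∏' n : ℕ, ((1 - Complex.exp (2 * π * I * τ) ^ (5 * n + 2))
        * (1 - Complex.exp (2 * π * I * τ) ^ (5 * n + 3)))⁻¹)
    (hy₂ : y₂ = fun τ : ℂ => Complex.exp (2 * π * I * τ * (-1 / 60)) *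
      ∏' n : ℕ, ((1 - Complex.exp (2 * π * I * τ) ^ (5 * n + 1))
        * (1 - Complex.exp (2 * π * I * τ) ^ (5 * n + 4)))⁻¹)
    (D : (ℂ → ℂ) → (ℂ → ℂ)) (hD : D = fun f => fun τ => (2 * π * I)⁻¹ * deriv f τ)
    (G₂ G₄ : ℂ → ℂ)
    (hG₂ : G₂ = fun q : ℂ =>
      -(1 / 12) + 2 * ∑' n : ℕ, (∑ d ∈ (n + 1).divisors, (d : ℂ)) * q ^ (n + 1))
    (hG₄ : G₄ = fun q : ℂ =>
      1 / 720 + 1 / 3 * ∑' n : ℕ, (∑ d ∈ (n + 1).divisors, (d : ℂ) ^ 3) * q ^ (n + 1))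
    (τ : ℂ) (hτ : 0 < τ.im) :
    (D (D y₁) τ + 2 * G₂ (Complex.exp (2 * π * I * τ)) * D y₁ τ
        - 11 / 5 * G₄ (Complex.exp (2 * π * I * τ)) * y₁ τ = 0) ∧
      (D (D y₂) τ + 2 * G₂ (Complex.exp (2 * π * I * τ)) * D y₂ τ
        - 11 / 5 * G₄ (Complex.exp (2 * π * I * τ)) * y₂ τ = 0) := by
  subst hG₂ hG₄
  refine ⟨?_, ?_⟩
  · exact character_ode (u := 2) (r := 2) (s := 3) (by norm_num) (by norm_num) (by norm_num)
      (by norm_num) (by norm_num) (fun d ↦ by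
        have := Nat.mod_lt d (show 5 > 0 by norm_num)
        unfold rrWeight
        interval_cases d % 5 <;> norm_num) (by norm_num) hy₁ hD hτ
  · exact character_ode (u := 3) (r := 1) (s := 4) (by norm_num) (by norm_num) (by norm_num)
      (by norm_num) (by norm_num) (fun d ↦ by
        have := Nat.mod_lt d (show 5 > 0 by norm_num)
        unfold rrWeight
        interval_cases d % 5 <;> norm_num) (by norm_num) hy₂ hD hτ
end

section
/- Define A₁(q) = 17/42 + ∑_{n≥1, n≡2,3,4,5 mod 7} n q^n/(1-q^n), A₂(q) = 5/42 + ∑_{n≥1, n≡1,3,4,6 mod 7} n q^n/(1-q^n), A₃(q) = -1/42 + ∑_{n≥1, n≡1,2,5,6 mod 7} n q^n/(1-q^n). Then det[[1,1,1],[A₁,A₂,A₃],[A₁',A₂',A₃']] + det[[1,1,1],[A₁,A₂,A₃],[A₁²,A₂²,A₃²]] = -(6/7³)·((q;q)_∞⁷/(q⁷;q⁷)_∞)², where ' = q d/dq. -/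
open scoped BigOperators
open Filter Topology

/-- The infinite `q`-shifted factorial `(x; q)_∞`. -/
noncomputable def qPoch (q x : ℂ) : ℂ := ∏' n : ℕ, (1 - x * q ^ n)

lemma summable_norm_neg_mul_pow {q : ℂ} (hq : ‖q‖ < 1) (x : ℂ) :
    Summable fun n : ℕ => ‖-(x * q ^ n)‖ := by
  simpa using (summable_geometric_of_lt_one (norm_nonneg q) hq).mul_left ‖x‖

lemma multipliable_qPoch {q : ℂ} (hq : ‖q‖ < 1) (x : ℂ) :
    Multipliable fun n : ℕ => 1 - x * q ^ n := by
  simpa [sub_eq_add_neg] using multipliable_one_add_of_summable (summable_norm_neg_mul_pow hq x)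

lemma qPoch_ne_zero {q x : ℂ} (hq : ‖q‖ < 1) (hx : ∀ n : ℕ, x * q ^ n ≠ 1) : qPoch q x ≠ 0 := by
  have := tprod_one_add_ne_zero_of_summable (f := fun n : ℕ => -(x * q ^ n))
    (fun n => by rw [← sub_eq_add_neg]; exact sub_ne_zero.2 (hx n).symm)
    (summable_norm_neg_mul_pow hq x)
  simpa [qPoch, sub_eq_add_neg] using this

lemma tendsto_qPoch {q : ℂ} (hq : ‖q‖ < 1) (x : ℂ) :
    Tendsto (fun N : ℕ => ∏ i ∈ Finset.range N, (1 - x * q ^ i)) atTop (𝓝 (qPoch q x)) :=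
  (multipliable_qPoch hq x).hasProd.tendsto_prod_nat

lemma qPoch_eq_mul {q : ℂ} (hq : ‖q‖ < 1) (x : ℂ) : qPoch q x = (1 - x) * qPoch q (x * q) := by
  have h : Multipliable fun n : ℕ => 1 - x * q ^ (n + 1) := by
    simpa [pow_succ', mul_assoc] using multipliable_qPoch hq (x * q)
  have := tprod_eq_zero_mul' (f := fun n : ℕ => 1 - x * q ^ n) h
  simpa [qPoch, pow_succ', mul_assoc] using this

lemma mul_pow_ne_one_of_norm_lt {q x : ℂ} (hq : ‖q‖ < 1) (hx : ‖x‖ < 1) (n : ℕ) :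
    x * q ^ n ≠ 1 := by
  intro h
  have h1 : ‖x * q ^ n‖ < 1 := by
    rw [norm_mul, norm_pow]
    exact mul_lt_one_of_nonneg_of_lt_one_left (norm_nonneg _) hx (pow_le_one₀ (norm_nonneg _) hq.le)
  rw [h] at h1
  simp at h1

lemma qPoch_self_ne_zero {q : ℂ} (hq : ‖q‖ < 1) : qPoch q q ≠ 0 :=
  qPoch_ne_zero hq (mul_pow_ne_one_of_norm_lt hq hq)

lemma continuous_qPoch {q : ℂ} (hq : ‖q‖ < 1) : Continuous (qPoch q) := by
  rw [continuous_iff_continuousAt]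
  intro x
  set U : Set ℂ := Metric.ball 0 (‖x‖ + 1)
  have hU : IsOpen U := Metric.isOpen_ball
  have h := Summable.hasProdLocallyUniformlyOn_nat_one_add (R := ℂ)
    (f := fun (n : ℕ) (y : ℂ) => -(y * q ^ n)) hU
    ((summable_geometric_of_lt_one (norm_nonneg q) hq).mul_left (‖x‖ + 1))
    (Eventually.of_forall fun n y hy => by
      rw [norm_neg, norm_mul, norm_pow]
      have : ‖y‖ < ‖x‖ + 1 := by simpa [U] using hy
      gcongr) (fun n => by fun_prop)
  have h2 := h.tendstoLocallyUniformlyOn_finsetRange.continuousOn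
    (Frequently.of_forall fun N => by fun_prop)
  have h3 : ContinuousOn (qPoch q) U := by
    refine h2.congr fun y _ => ?_
    simp [qPoch, sub_eq_add_neg]
  exact h3.continuousAt (hU.mem_nhds (by simp [U]))

/-- The coefficient `(-1)^k q^{k(k-1)/2}` of the theta series. -/
noncomputable def thetaCoeff (q : ℂ) (k : ℤ) : ℂ := (-1) ^ k * q ^ (k * (k - 1) / 2)

lemma thetaCoeff_succ {q : ℂ} (h0 : q ≠ 0) (k : ℤ) :
    thetaCoeff q (k + 1) = -q ^ k * thetaCoeff q k := by
  have h : (k + 1) * (k + 1 - 1) / 2 = k + k * (k - 1) / 2 := by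
    rw [show (k + 1) * (k + 1 - 1) = k * (k - 1) + k * 2 by ring, Int.add_mul_ediv_right _ _ two_ne_zero]
    ring
  rw [thetaCoeff, thetaCoeff, h, zpow_add₀ h0, zpow_add₀ (by norm_num)]
  simp
  ring

lemma thetaCoeff_one_sub (q : ℂ) (k : ℤ) : thetaCoeff q (1 - k) = -thetaCoeff q k := by
  rw [thetaCoeff, thetaCoeff, show (1 - k) * (1 - k - 1) = k * (k - 1) by ring,
    sub_eq_add_neg, zpow_add₀ (by norm_num), zpow_neg, ← inv_zpow]
  norm_num

/-- The reciprocal `1 / (q; q)_n`, extended by zero to negative `n`. -/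
noncomputable def invQFact (q : ℂ) (n : ℤ) : ℂ :=
  if n < 0 then 0 else (∏ i ∈ Finset.range n.toNat, (1 - q * q ^ i))⁻¹

lemma one_sub_mul_pow_ne_zero {q : ℂ} (hq : ‖q‖ < 1) (n : ℕ) : 1 - q * q ^ n ≠ 0 :=
  sub_ne_zero.2 (mul_pow_ne_one_of_norm_lt hq hq n).symm

lemma invQFact_sub_one {q : ℂ} (hq : ‖q‖ < 1) (n : ℤ) :
    invQFact q (n - 1) = (1 - q ^ n) * invQFact q n := by
  rcases lt_trichotomy n 0 with h | rfl | h
  · simp [invQFact, h, show n - 1 < 0 by omega]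
  · simp [invQFact]
  · obtain ⟨m, rfl⟩ : ∃ m : ℕ, n = m + 1 := ⟨(n - 1).toNat, by omega⟩
    have h1 : ((m : ℤ) + 1).toNat = m + 1 := by omega
    have h2 : ¬ ((m : ℤ) + 1 < 0) := by omega
    have h3 : ¬ ((m : ℤ) < 0) := by omega
    have h4 := one_sub_mul_pow_ne_zero hq m
    have h5 : q ^ ((m : ℤ) + 1) = q * q ^ m := by
      rw [← pow_succ']; exact_mod_cast zpow_natCast q (m + 1)
    simp only [invQFact, add_sub_cancel_right, h1, h2, h3, if_false, Finset.prod_range_succ,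
      Int.toNat_natCast, mul_inv, h5]
    field_simp

lemma tendsto_invQFact {q : ℂ} (hq : ‖q‖ < 1) :
    Tendsto (invQFact q) atTop (𝓝 (qPoch q q)⁻¹) := by
  have h := ((tendsto_qPoch hq q).inv₀ (qPoch_self_ne_zero hq)).comp
    (show Tendsto Int.toNat atTop atTop from
      tendsto_atTop_atTop.2 fun b => ⟨b, fun a ha => by omega⟩)
  refine h.congr' ?_
  filter_upwards [eventually_ge_atTop 0] with n hn
  simp [invQFact, hn.not_gt]

lemma exists_norm_invQFact_le {q : ℂ} (hq : ‖q‖ < 1) : ∃ C, ∀ n, ‖invQFact q n‖ ≤ C := by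
  have h := (tendsto_qPoch hq q).inv₀ (qPoch_self_ne_zero hq)
  obtain ⟨C, hC⟩ := h.norm.bddAbove_range
  refine ⟨max C 0, fun n => ?_⟩
  unfold invQFact
  split_ifs
  · simp
  · exact le_max_of_le_left (hC ⟨n.toNat, rfl⟩)

/-- Coefficients of the finite form of the Jacobi triple product. -/
noncomputable def tripleCoeff (q : ℂ) (N : ℕ) (k : ℤ) : ℂ :=
  (∏ i ∈ Finset.range (2 * N), (1 - q * q ^ i)) * invQFact q (N + k) * invQFact q (N - k)

lemma tripleCoeff_succ {q : ℂ} (hq : ‖q‖ < 1) (h0 : q ≠ 0) (N : ℕ) (k : ℤ) :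
    tripleCoeff q (N + 1) k = (1 + q ^ (2 * N + 1)) * tripleCoeff q N k
      + q ^ (N + 1 - k : ℤ) * tripleCoeff q N (k - 1)
      + q ^ (N + 1 + k : ℤ) * tripleCoeff q N (k + 1) := by
  set F := invQFact q (N + 1 + k) with hF
  set G := invQFact q (N + 1 - k) with hG
  have e1 : invQFact q (N + k) = (1 - q ^ (N + 1 + k : ℤ)) * F := by
    rw [hF, ← invQFact_sub_one hq]; congr 1; ring
  have e2 : invQFact q (N - k) = (1 - q ^ (N + 1 - k : ℤ)) * G := by
    rw [hG, ← invQFact_sub_one hq]; congr 1; ring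
  have e3 : invQFact q (N + (k - 1)) = (1 - q ^ (N + k : ℤ)) * invQFact q (N + k) := by
    rw [← invQFact_sub_one hq]; congr 1; ring
  have e4 : invQFact q (N - (k + 1)) = (1 - q ^ (N - k : ℤ)) * invQFact q (N - k) := by
    rw [← invQFact_sub_one hq]; congr 1; ring
  have e5 : (N : ℤ) - (k - 1) = N + 1 - k := by ring
  have e6 : (N : ℤ) + (k + 1) = N + 1 + k := by ring
  have e7 : q ^ (N + 1 + k : ℤ) = q ^ N * q * q ^ k := by
    rw [zpow_add₀ h0, zpow_add₀ h0]; simp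
  have e8 : q ^ (N + 1 - k : ℤ) = q ^ N * q * (q ^ k)⁻¹ := by
    rw [zpow_sub₀ h0, zpow_add₀ h0]; simp [div_eq_mul_inv]
  have e9 : q ^ (N + k : ℤ) = q ^ N * q ^ k := by rw [zpow_add₀ h0]; simp
  have e10 : q ^ (N - k : ℤ) = q ^ N * (q ^ k)⁻¹ := by
    rw [zpow_sub₀ h0]; simp [div_eq_mul_inv]
  have hk : q ^ k ≠ 0 := zpow_ne_zero _ h0
  have e11 : ((N + 1 : ℕ) : ℤ) = N + 1 := by push_cast; ring
  simp only [tripleCoeff, e11, e5, e6, ← hF, ← hG]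
  rw [e3, e4, e1, e2, e7, e8, e9, e10, show 2 * (N + 1) = 2 * N + 1 + 1 by ring,
    Finset.prod_range_succ, Finset.prod_range_succ]
  field_simp
  ring

lemma tripleCoeff_zero (q : ℂ) (k : ℤ) : tripleCoeff q 0 k = if k = 0 then 1 else 0 := by
  rcases lt_trichotomy k 0 with h | rfl | h
  · simp [tripleCoeff, invQFact, h, h.ne]
  · simp [tripleCoeff, invQFact]
  · simp [tripleCoeff, invQFact, h, h.ne']

lemma hasSum_tripleCoeff {q x : ℂ} (hq : ‖q‖ < 1) (h0 : q ≠ 0) (hx : x ≠ 0) (N : ℕ) :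
    HasSum (fun k : ℤ => tripleCoeff q N k * (thetaCoeff q k * x ^ k))
      ((∏ i ∈ Finset.range N, (1 - x * q ^ i)) * ∏ i ∈ Finset.range N, (1 - x⁻¹ * q * q ^ i)) := by
  induction N with
  | zero =>
    convert hasSum_ite_eq (0 : ℤ) (1 : ℂ) using 1
    · ext k
      rw [tripleCoeff_zero]
      split_ifs with h <;> simp [h, thetaCoeff]
    · simp
  | succ N ih =>
    have h1 := ((Equiv.subRight (1 : ℤ)).hasSum_iff.2 ih).mul_left (-x * q ^ N)
    have h2 := ((Equiv.addRight (1 : ℤ)).hasSum_iff.2 ih).mul_left (-x⁻¹ * q * q ^ N)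
    have h3 := ((ih.mul_left (1 + q ^ (2 * N + 1))).add h1).add h2
    rw [Finset.prod_range_succ, Finset.prod_range_succ]
    set A := ∏ i ∈ Finset.range N, (1 - x * q ^ i)
    set B := ∏ i ∈ Finset.range N, (1 - x⁻¹ * q * q ^ i)
    have hv : A * (1 - x * q ^ N) * (B * (1 - x⁻¹ * q * q ^ N)) =
        (1 + q ^ (2 * N + 1)) * (A * B) + -x * q ^ N * (A * B) + -x⁻¹ * q * q ^ N * (A * B) := by
      field_simp
      ring
    rw [hv]
    refine h3.congr_fun fun k => ?_
    have e7 : q ^ (N + 1 + k : ℤ) = q ^ N * q * q ^ k := by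
      rw [zpow_add₀ h0, zpow_add₀ h0]; simp
    have e8 : q ^ (N + 1 - k : ℤ) = q ^ N * q * (q ^ k)⁻¹ := by
      rw [zpow_sub₀ h0, zpow_add₀ h0]; simp [div_eq_mul_inv]
    have hk : q ^ k ≠ 0 := zpow_ne_zero _ h0
    have t1 := thetaCoeff_succ h0 k
    have t2 : thetaCoeff q (k - 1) = -q * (q ^ k)⁻¹ * thetaCoeff q k := by
      have := thetaCoeff_succ h0 (k - 1)
      rw [sub_add_cancel, zpow_sub₀ h0] at this
      rw [this]; field_simp
    simp only [Function.comp, Equiv.subRight_apply, Equiv.coe_addRight]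
    rw [tripleCoeff_succ hq h0, t1, t2, e7, e8, zpow_add₀ hx, zpow_sub₀ hx, zpow_one]
    field_simp

lemma summable_int_of_ratio {f : ℤ → ℝ} {a b : ℕ → ℝ} (hf : ∀ k, 0 ≤ f k)
    (ha : Tendsto a atTop (𝓝 0)) (hb : Tendsto b atTop (𝓝 0))
    (h1 : ∀ n : ℕ, f (n + 1) = a n * f n) (h2 : ∀ n : ℕ, f (-(n + 1)) = b n * f (-n)) :
    Summable f := by
  have key : ∀ (g c : ℕ → ℝ), (∀ n, 0 ≤ g n) → Tendsto c atTop (𝓝 0) →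
      (∀ n, g (n + 1) = c n * g n) → Summable g := by
    intro g c hg hc h
    refine summable_of_ratio_norm_eventually_le (r := 1 / 2) (by norm_num) ?_
    filter_upwards [hc.eventually_le_const (show (0 : ℝ) < 1 / 2 by norm_num)] with n hn
    rw [Real.norm_of_nonneg (hg _), Real.norm_of_nonneg (hg _), h]
    exact mul_le_mul_of_nonneg_right hn (hg n)
  refine Summable.of_nat_of_neg (key _ a (fun n => hf _) ha fun n => ?_)
    (key _ b (fun n => hf _) hb fun n => ?_)
  · rw [← h1]; push_cast; rfl
  · rw [← h2]; push_cast; rfl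

/-- Two-sided sequences which are the Laurent coefficients of a function on the punctured plane. -/
def RapidDecay (a : ℤ → ℂ) : Prop := ∀ R : ℝ, 0 < R → Summable fun k => ‖a k‖ * R ^ k

lemma rapidDecay_thetaCoeff {q : ℂ} (hq : ‖q‖ < 1) (h0 : q ≠ 0) : RapidDecay (thetaCoeff q) := by
  intro R hR
  have hp := tendsto_pow_atTop_nhds_zero_of_lt_one (norm_nonneg q) hq
  have hq0 : ‖q‖ ≠ 0 := norm_ne_zero_iff.2 h0
  refine summable_int_of_ratio (a := fun n => ‖q‖ ^ n * R) (b := fun n => ‖q‖ ^ n * (‖q‖ * R⁻¹))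
    (fun k => by positivity) (by simpa using hp.mul_const R)
    (by simpa using hp.mul_const (‖q‖ * R⁻¹)) (fun n => ?_) (fun n => ?_)
  · rw [thetaCoeff_succ h0, zpow_add₀ hR.ne']
    simp
    ring
  · have h := thetaCoeff_succ h0 (-(n + 1))
    rw [show -((n : ℤ) + 1) + 1 = -n by ring] at h
    rw [h, norm_mul, norm_neg, norm_zpow, zpow_neg ‖q‖, zpow_neg R, zpow_neg R, zpow_add₀ hR.ne',
      zpow_add₀ hq0]
    simp
    field_simp

/-- The value at `x` of the Laurent series with coefficients `a`. -/
noncomputable def laurentEval (a : ℤ → ℂ) (x : ℂ) : ℂ := ∑' k : ℤ, a k * x ^ k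

lemma RapidDecay.summable_norm {a : ℤ → ℂ} (ha : RapidDecay a) {x : ℂ} (hx : x ≠ 0) :
    Summable fun k => ‖a k * x ^ k‖ := by
  simpa using ha ‖x‖ (norm_pos_iff.2 hx)

lemma RapidDecay.hasSum {a : ℤ → ℂ} (ha : RapidDecay a) {x : ℂ} (hx : x ≠ 0) :
    HasSum (fun k => a k * x ^ k) (laurentEval a x) :=
  (ha.summable_norm hx).of_norm.hasSum

/-- The theta function `∑ (-1)^k q^{k(k-1)/2} x^k`. -/
noncomputable def theta (q x : ℂ) : ℂ := laurentEval (thetaCoeff q) x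

/-- The Jacobi triple product identity. -/
theorem theta_eq_prod {q x : ℂ} (hq : ‖q‖ < 1) (h0 : q ≠ 0) (hx : x ≠ 0) :
    theta q x = qPoch q q * qPoch q x * qPoch q (x⁻¹ * q) := by
  have hφ := qPoch_self_ne_zero hq
  obtain ⟨C, hC⟩ := exists_norm_invQFact_le hq
  obtain ⟨B, hB⟩ := (tendsto_qPoch hq q).norm.bddAbove_range
  have hC0 : 0 ≤ C := (norm_nonneg _).trans (hC 0)
  have hB' : ∀ N : ℕ, ‖∏ i ∈ Finset.range N, (1 - q * q ^ i)‖ ≤ B := fun N => hB ⟨N, rfl⟩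
  have hB0 : 0 ≤ B := (norm_nonneg _).trans (hB' 0)
  have hlim : Tendsto (fun N : ℕ => ∑' k : ℤ, tripleCoeff q N k * (thetaCoeff q k * x ^ k)) atTop
      (𝓝 (∑' k : ℤ, (qPoch q q)⁻¹ * (thetaCoeff q k * x ^ k))) := by
    refine tendsto_tsum_of_dominated_convergence
      (bound := fun k => B * C * C * ‖thetaCoeff q k * x ^ k‖)
      (((rapidDecay_thetaCoeff hq h0).summable_norm hx).mul_left _) (fun k => ?_)
      (Eventually.of_forall fun N k => ?_)
    · refine Tendsto.mul_const _ ?_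
      have hN : Tendsto (fun N : ℕ => (N : ℤ)) atTop atTop := tendsto_natCast_atTop_atTop
      have h1 := (tendsto_invQFact hq).comp (tendsto_atTop_add_const_right _ k hN)
      have h2 := (tendsto_invQFact hq).comp (tendsto_atTop_add_const_right _ (-k) hN)
      have h3 := (tendsto_qPoch hq q).comp
        (tendsto_id.const_mul_atTop' (show 0 < 2 by norm_num))
      have h4 := (h3.mul h1).mul h2
      rw [mul_inv_cancel₀ hφ, one_mul] at h4
      exact h4
    · rw [norm_mul, tripleCoeff, norm_mul, norm_mul]
      gcongr
      · exact hB' _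
      · exact hC _
      · exact hC _
  have hlim2 := (tendsto_qPoch hq x).mul (tendsto_qPoch hq (x⁻¹ * q))
  have h := tendsto_nhds_unique (hlim.congr fun N => (hasSum_tripleCoeff hq h0 hx N).tsum_eq) hlim2
  rw [tsum_mul_left] at h
  rw [theta, laurentEval, mul_assoc, ← h, mul_inv_cancel_left₀ hφ]

/-- The convolution of two two-sided sequences. -/
noncomputable def intConv (a b : ℤ → ℂ) (m : ℤ) : ℂ := ∑' n : ℤ, a n * b (m - n)

/-- The change of variables `(m, n) ↦ (n, m - n)`. -/
def intConvEquiv : ℤ × ℤ ≃ ℤ × ℤ where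
  toFun p := (p.2, p.1 - p.2)
  invFun p := (p.1 + p.2, p.1)
  left_inv p := by ext <;> simp
  right_inv p := by ext <;> simp

lemma RapidDecay.summable_intConv {a b : ℤ → ℂ} (ha : RapidDecay a) (hb : RapidDecay b)
    {R : ℝ} (hR : 0 < R) : Summable fun p : ℤ × ℤ => ‖a p.2‖ * ‖b (p.1 - p.2)‖ * R ^ p.1 := by
  have h := (ha R hR).mul_of_nonneg (hb R hR) (fun k => by positivity) (fun k => by positivity)
  refine (intConvEquiv.summable_iff.2 h).congr fun p => ?_
  simp only [Function.comp, intConvEquiv, Equiv.coe_fn_mk]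
  rw [zpow_sub₀ hR.ne']
  field_simp

lemma RapidDecay.intConv {a b : ℤ → ℂ} (ha : RapidDecay a) (hb : RapidDecay b) :
    RapidDecay (intConv a b) := by
  intro R hR
  have h := ha.summable_intConv hb hR
  refine Summable.of_nonneg_of_le (fun m => by positivity) (fun m => ?_) h.prod
  have hm : Summable fun n => ‖a n * b (m - n)‖ := by
    refine ((h.prod_factor m).mul_right (R ^ m)⁻¹).congr fun n => ?_
    have := (zpow_pos hR m).ne'
    rw [norm_mul]
    field_simp
  dsimp only
  rw [tsum_mul_right]
  gcongr
  simpa [_root_.intConv] using norm_tsum_le_tsum_norm hm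

lemma laurentEval_intConv {a b : ℤ → ℂ} (ha : RapidDecay a) (hb : RapidDecay b) {x : ℂ}
    (hx : x ≠ 0) : laurentEval (intConv a b) x = laurentEval a x * laurentEval b x := by
  have h := ha.summable_intConv hb (norm_pos_iff.2 hx)
  have h2 : Summable fun p : ℤ × ℤ => a p.2 * b (p.1 - p.2) * x ^ p.1 :=
    Summable.of_norm (by simpa using h)
  rw [laurentEval, laurentEval, laurentEval,
    tsum_mul_tsum_of_summable_norm (ha.summable_norm hx) (hb.summable_norm hx),
    ← intConvEquiv.tsum_eq]
  have h3 : ∀ p : ℤ × ℤ, a (intConvEquiv p).1 * x ^ (intConvEquiv p).1 *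
      (b (intConvEquiv p).2 * x ^ (intConvEquiv p).2) = a p.2 * b (p.1 - p.2) * x ^ p.1 := by
    intro p
    simp only [intConvEquiv, Equiv.coe_fn_mk]
    rw [zpow_sub₀ hx]
    field_simp
  rw [tsum_congr h3, h2.tsum_prod]
  refine tsum_congr fun m => ?_
  dsimp only
  rw [intConv, tsum_mul_right]

lemma intConv_comm (a b : ℤ → ℂ) : intConv a b = intConv b a := by
  ext m
  rw [intConv, intConv, ← (Equiv.subLeft m).tsum_eq]
  refine tsum_congr fun n => ?_
  simp [mul_comm]

/-- The coefficient form of `f (q x) = c⁻¹ x^(-d) f x`. -/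
def QuasiPeriodic (q : ℂ) (d : ℤ) (c : ℂ) (a : ℤ → ℂ) : Prop := ∀ k, a (k + d) = c * q ^ k * a k

lemma QuasiPeriodic.intConv {q : ℂ} (h0 : q ≠ 0) {d e : ℤ} {c c' : ℂ} {a b : ℤ → ℂ}
    (ha : QuasiPeriodic q d c a) (hb : QuasiPeriodic q e c' b) :
    QuasiPeriodic q (d + e) (c * c') (intConv a b) := by
  intro m
  rw [_root_.intConv, _root_.intConv, ← (Equiv.addRight d).tsum_eq, ← tsum_mul_left]
  refine tsum_congr fun n => ?_
  rw [Equiv.coe_addRight, ha, show m + (d + e) - (n + d) = m - n + e by ring, hb, zpow_sub₀ h0]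
  have := zpow_ne_zero n h0
  field_simp

lemma intConv_reflect {e f : ℤ} {a b a' b' : ℤ → ℂ} (ha : ∀ k, a (e - k) = a' k)
    (hb : ∀ k, b (f - k) = b' k) (k : ℤ) : intConv a b (e + f - k) = intConv a' b' k := by
  rw [intConv, intConv, ← (Equiv.subLeft e).tsum_eq]
  refine tsum_congr fun n => ?_
  rw [Equiv.subLeft_apply, ha, show e + f - k - (e - n) = f - (k - n) by ring, hb]

/-- The Laurent coefficients of `x ↦ theta q (α * x)`. -/
noncomputable def thetaScaled (q α : ℂ) (k : ℤ) : ℂ := thetaCoeff q k * α ^ k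

lemma rapidDecay_thetaScaled {q α : ℂ} (hq : ‖q‖ < 1) (h0 : q ≠ 0) (hα : α ≠ 0) :
    RapidDecay (thetaScaled q α) := by
  intro R hR
  refine (rapidDecay_thetaCoeff hq h0 (‖α‖ * R) (by positivity)).congr fun k => ?_
  rw [thetaScaled, norm_mul, norm_zpow, mul_zpow]
  ring

lemma laurentEval_thetaScaled (q α x : ℂ) :
    laurentEval (thetaScaled q α) x = theta q (α * x) := by
  simp only [theta, laurentEval, thetaScaled, mul_zpow, mul_assoc]

lemma quasiPeriodic_thetaScaled {q α : ℂ} (h0 : q ≠ 0) (hα : α ≠ 0) :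
    QuasiPeriodic q 1 (-α) (thetaScaled q α) := by
  intro k
  rw [thetaScaled, thetaScaled, thetaCoeff_succ h0, zpow_add₀ hα]
  simp
  ring

lemma thetaScaled_one_sub {q α : ℂ} (hα : α ≠ 0) (k : ℤ) :
    thetaScaled q α (1 - k) = -α * thetaScaled q α⁻¹ k := by
  rw [thetaScaled, thetaScaled, thetaCoeff_one_sub, zpow_sub₀ hα, inv_zpow]
  simp
  ring

lemma thetaScaled_neg {q p : ℂ} (h0 : q ≠ 0) (hp : p ^ 2 = q) (k : ℤ) :
    thetaScaled q p (0 - k) = thetaScaled q p k := by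
  have hp0 : p ≠ 0 := by rintro rfl; exact h0 (by simp [← hp])
  have h : thetaCoeff q (0 - k) = q ^ k * thetaCoeff q k := by
    rw [show 0 - k = 1 - (k + 1) by ring, thetaCoeff_one_sub, thetaCoeff_succ h0]
    ring
  rw [thetaScaled, thetaScaled, h, zero_sub, zpow_neg, ← hp, ← zpow_natCast, ← zpow_mul, mul_comm _ k,
    zpow_mul]
  have := zpow_ne_zero k hp0
  field_simp
  simp

/-- The Laurent coefficients of `theta q (α * x) * theta q (x / α)`. -/
noncomputable def thetaPair (q α : ℂ) : ℤ → ℂ := intConv (thetaScaled q α) (thetaScaled q α⁻¹)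

lemma thetaPair_reflect {q α : ℂ} (hα : α ≠ 0) (k : ℤ) :
    thetaPair q α (2 - k) = thetaPair q α k := by
  have h := intConv_reflect (thetaScaled_one_sub (q := q) hα)
    (thetaScaled_one_sub (q := q) (inv_ne_zero hα)) k
  rw [show (1 : ℤ) + 1 = 2 by norm_num] at h
  rw [thetaPair, h, intConv_comm (thetaScaled q α), intConv, intConv]
  refine tsum_congr fun n => ?_
  rw [inv_inv]
  field_simp

/-- The Laurent coefficients of `theta q (p * x) * theta q (-p * x) * theta q (-x)`. -/
noncomputable def thetaTorsion (q p : ℂ) : ℤ → ℂ :=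
  intConv (intConv (thetaScaled q p) (thetaScaled q (-p))) (thetaScaled q (-1))

lemma thetaTorsion_reflect {q p : ℂ} (h0 : q ≠ 0) (hp : p ^ 2 = q) (k : ℤ) :
    thetaTorsion q p (1 - k) = thetaTorsion q p k := by
  have h1 := intConv_reflect (thetaScaled_neg h0 hp) (thetaScaled_neg h0 ((neg_sq p).trans hp))
  have h2 := intConv_reflect h1 (thetaScaled_one_sub (q := q) (α := -1) (by norm_num)) k
  simpa [thetaTorsion] using h2

/-- The values of the torsion factor. -/
noncomputable def torsionFactor (q p x : ℂ) : ℂ :=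
  theta q (p * x) * theta q (-p * x) * theta q (-1 * x)

/-- The coefficient space of even theta functions of degree seven vanishing at the nontrivial
two-torsion points. -/
structure IsEvenTheta (q : ℂ) (a : ℤ → ℂ) : Prop where
  rapidDecay : RapidDecay a
  shift : ∀ k, a (k + 7) = -q ^ (k + 1) * a k
  reflect : ∀ k, a (5 - k) = a k

lemma exists_isEvenTheta {q p α β : ℂ} (hq : ‖q‖ < 1) (h0 : q ≠ 0) (hp : p ^ 2 = q) (hα : α ≠ 0)
    (hβ : β ≠ 0) : ∃ a, IsEvenTheta q a ∧ ∀ x ≠ 0, laurentEval a x = torsionFactor q p x *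
      (theta q (α * x) * theta q (α⁻¹ * x) * (theta q (β * x) * theta q (β⁻¹ * x))) := by
  have hp0 : p ≠ 0 := by rintro rfl; exact h0 (by simp [← hp])
  have hα' := inv_ne_zero hα
  have hβ' := inv_ne_zero hβ
  have h1 : (-1 : ℂ) ≠ 0 := by norm_num
  have R : ∀ {γ : ℂ}, γ ≠ 0 → RapidDecay (thetaScaled q γ) := rapidDecay_thetaScaled hq h0
  have Q : ∀ {γ : ℂ}, γ ≠ 0 → QuasiPeriodic q 1 (-γ) (thetaScaled q γ) :=
    quasiPeriodic_thetaScaled h0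
  have rT := ((R hp0).intConv (R (neg_ne_zero.2 hp0))).intConv (R h1)
  have ra := (R hα).intConv (R hα')
  have rb := (R hβ).intConv (R hβ')
  refine ⟨intConv (thetaTorsion q p) (intConv (thetaPair q α) (thetaPair q β)),
    ⟨rT.intConv (ra.intConv rb), fun k => ?_, fun k => ?_⟩, fun x hx => ?_⟩
  · have h := ((((Q hp0).intConv h0 (Q (neg_ne_zero.2 hp0))).intConv h0 (Q h1)).intConv h0
      (((Q hα).intConv h0 (Q hα')).intConv h0 ((Q hβ).intConv h0 (Q hβ')))) k
    rw [show (1 : ℤ) + 1 + 1 + (1 + 1 + (1 + 1)) = 7 by norm_num] at h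
    refine h.trans ?_
    rw [zpow_add₀ h0, zpow_one, ← hp]
    simp only [thetaTorsion, thetaPair]
    field_simp
  · have h := intConv_reflect (thetaTorsion_reflect h0 hp) (intConv_reflect
      (thetaPair_reflect (q := q) hα) (thetaPair_reflect (q := q) hβ)) k
    simpa using h
  · simp only [thetaTorsion, thetaPair]
    rw [laurentEval_intConv rT (ra.intConv rb) hx, laurentEval_intConv ra rb hx,
      laurentEval_intConv ((R hp0).intConv (R (neg_ne_zero.2 hp0))) (R h1) hx,
      laurentEval_intConv (R hp0) (R (neg_ne_zero.2 hp0)) hx,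
      laurentEval_intConv (R hα) (R hα') hx, laurentEval_intConv (R hβ) (R hβ') hx]
    simp only [laurentEval_thetaScaled, torsionFactor]

/-- The exponents `(7 n ^ 2 + ρ n) / 2` of the mod 7 theta series. -/
def thetaExp (ρ n : ℤ) : ℕ := ((7 * n ^ 2 + ρ * n) / 2).toNat

/-- The moments `∑ (-1)^n (14 n + ρ)^j q^{(7 n ^ 2 + ρ n) / 2}` of the mod 7 theta series. -/
noncomputable def thetaMoment (ρ : ℤ) (j : ℕ) (q : ℂ) : ℂ :=
  ∑' n : ℤ, (-1) ^ n * (14 * n + ρ) ^ j * q ^ thetaExp ρ n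

lemma abs_mul_le_seven_mul_sq {ρ : ℤ} (hρ : |ρ| ≤ 5) (n : ℤ) : 0 ≤ 7 * n ^ 2 + ρ * n := by
  have h1 := abs_le.1 hρ
  rcases le_total 0 n with h | h
  · rcases h.eq_or_lt with rfl | h
    · simp
    · nlinarith
  · rcases h.eq_or_lt with rfl | h
    · simp
    · nlinarith

lemma zpow_eq_pow_thetaExp {ρ : ℤ} (hρ : |ρ| ≤ 5) (q : ℂ) (n : ℤ) :
    q ^ ((7 * n ^ 2 + ρ * n) / 2) = q ^ thetaExp ρ n := by
  rw [← zpow_natCast, thetaExp, Int.toNat_of_nonneg]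
  exact Int.ediv_nonneg (abs_mul_le_seven_mul_sq hρ n) (by norm_num)

lemma IsEvenTheta.apply_eq {q : ℂ} {a : ℤ → ℂ} (ha : IsEvenTheta q a) (h0 : q ≠ 0) {r ρ : ℤ}
    (hr : ρ = 2 * r - 5) (hρ : |ρ| ≤ 5) (n : ℤ) :
    a (7 * n + r) = (-1) ^ n * q ^ thetaExp ρ n * a r := by
  rw [← zpow_eq_pow_thetaExp hρ]
  have step : ∀ n : ℤ, (-1 : ℂ) ^ (n + 1) * q ^ ((7 * (n + 1) ^ 2 + ρ * (n + 1)) / 2) =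
      -q ^ (7 * n + r + 1) * ((-1) ^ n * q ^ ((7 * n ^ 2 + ρ * n) / 2)) := by
    intro n
    have : (7 * (n + 1) ^ 2 + ρ * (n + 1)) / 2 = (7 * n + r + 1) + (7 * n ^ 2 + ρ * n) / 2 := by
      rw [show 7 * (n + 1) ^ 2 + ρ * (n + 1) = (7 * n ^ 2 + ρ * n) + (7 * n + r + 1) * 2 by
        rw [hr]; ring, Int.add_mul_ediv_right _ _ two_ne_zero]
      ring
    rw [this, zpow_add₀ h0, zpow_add₀ (by norm_num : (-1 : ℂ) ≠ 0)]
    simp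
    ring
  have hs : ∀ n : ℤ, a (7 * (n + 1) + r) = -q ^ (7 * n + r + 1) * a (7 * n + r) := by
    intro n
    rw [← ha.shift]
    congr 1
    ring
  induction n with
  | zero => simp
  | succ n ih => rw [hs, ih, step]; ring
  | pred n ih =>
    have h1 := hs (-n - 1)
    have h2 := step (-n - 1)
    rw [sub_add_cancel] at h1 h2
    rw [h1, h2] at ih
    have h3 : -q ^ (7 * (-(n : ℤ) - 1) + r + 1) ≠ 0 := neg_ne_zero.2 (zpow_ne_zero _ h0)
    apply mul_left_cancel₀ h3
    rw [ih]
    ring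

lemma tsum_int_eq_sum_mod_seven {f : ℤ → ℂ} (hf : Summable f) :
    ∑' k, f k = ∑ r : Fin 7, ∑' n : ℤ, f (7 * n + (r : ℕ)) := by
  have h1 := (Int.divModEquiv 7).symm.summable_iff.2 hf
  have h2 : Summable fun c : Fin 7 × ℤ =>
      f ((Int.divModEquiv 7).symm (Equiv.prodComm (Fin 7) ℤ c)) :=
    (Equiv.prodComm (Fin 7) ℤ).summable_iff.2 h1
  rw [← (Int.divModEquiv 7).symm.tsum_eq, ← (Equiv.prodComm (Fin 7) ℤ).tsum_eq, h2.tsum_prod,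
    tsum_fintype]
  refine Finset.sum_congr rfl fun r _ => tsum_congr fun n => congrArg f ?_
  simp [Int.divModEquiv, mul_comm]

lemma IsEvenTheta.tsum_mul {q : ℂ} {a : ℤ → ℂ} (ha : IsEvenTheta q a) (h0 : q ≠ 0) {φ : ℤ → ℂ}
    (hs : Summable fun k => a k * φ k) : ∑' k, a k * φ k =
      a 3 * ∑' n : ℤ, (-1) ^ n * q ^ thetaExp 1 n * (φ (7 * n + 3) + φ (5 - (7 * n + 3))) +
      a 4 * ∑' n : ℤ, (-1) ^ n * q ^ thetaExp 3 n * (φ (7 * n + 4) + φ (5 - (7 * n + 4))) +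
      a 5 * ∑' n : ℤ, (-1) ^ n * q ^ thetaExp 5 n * (φ (7 * n + 5) + φ (5 - (7 * n + 5))) := by
  have inj : ∀ r : ℤ, Function.Injective fun n : ℤ => 7 * n + r := by
    intro r m n h
    simpa using h
  have hS : ∀ r : ℤ, Summable fun n : ℤ => a (7 * n + r) * φ (7 * n + r) := fun r =>
    hs.comp_injective (inj r)
  have inj2 : ∀ r : ℤ, Function.Injective fun n : ℤ => 5 - (7 * n + r) := by
    intro r m n h
    simpa using h
  have hS2 : ∀ r : ℤ, Summable fun n : ℤ => a (5 - (7 * n + r)) * φ (5 - (7 * n + r)) := fun r =>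
    hs.comp_injective (inj2 r)
  have pair : ∀ {r ρ : ℤ}, ρ = 2 * r - 5 → |ρ| ≤ 5 →
      (∑' n : ℤ, a (7 * n + r) * φ (7 * n + r)) + ∑' n : ℤ, a (7 * n + (5 - r)) * φ (7 * n + (5 - r))
        = a r * ∑' n : ℤ, (-1) ^ n * q ^ thetaExp ρ n * (φ (7 * n + r) + φ (5 - (7 * n + r))) := by
    intro r ρ hr hρ
    rw [← (Equiv.neg ℤ).tsum_eq fun n : ℤ => a (7 * n + (5 - r)) * φ (7 * n + (5 - r))]
    have e : ∀ n : ℤ, 7 * (Equiv.neg ℤ n) + (5 - r) = 5 - (7 * n + r) := by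
      intro n
      simp only [Equiv.neg_apply]
      ring
    simp only [e]
    rw [← (hS r).tsum_add (hS2 r), ← tsum_mul_left]
    refine tsum_congr fun n => ?_
    rw [ha.reflect, ha.apply_eq h0 hr hρ]
    ring
  have a6 : a 6 = 0 := by
    have h1 := ha.shift (-1)
    have h2 := ha.reflect 6
    norm_num at h1 h2
    rw [h2] at h1
    exact self_eq_neg.1 h1
  have a6' : ∀ n : ℤ, a (7 * n + 6) = 0 := by
    intro n
    induction n with
    | zero => simpa using a6
    | succ n ih =>
      rw [show 7 * ((n : ℤ) + 1) + 6 = 7 * n + 6 + 7 by ring, ha.shift, ih, mul_zero]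
    | pred n ih =>
      rw [show 7 * (-(n : ℤ)) + 6 = 7 * (-(n : ℤ) - 1) + 6 + 7 by ring, ha.shift] at ih
      exact (mul_eq_zero.1 ih).resolve_left (neg_ne_zero.2 (zpow_ne_zero _ h0))
  have p3 := pair (r := 3) (ρ := 1) (by norm_num) (by norm_num)
  have p4 := pair (r := 4) (ρ := 3) (by norm_num) (by norm_num)
  have p5 := pair (r := 5) (ρ := 5) (by norm_num) (by norm_num)
  norm_num at p3 p4 p5
  rw [tsum_int_eq_sum_mod_seven hs, Fin.sum_univ_seven]
  norm_num [a6']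
  rw [← p3, ← p4, ← p5]
  ring

lemma IsEvenTheta.laurentEval_root {q : ℂ} {a : ℤ → ℂ} (ha : IsEvenTheta q a) (h0 : q ≠ 0) {x : ℂ}
    (hx : x ^ 7 = 1) : laurentEval a x = a 3 * ((x ^ 3 + x ^ 2) * thetaMoment 1 0 q) +
      a 4 * ((x ^ 4 + x) * thetaMoment 3 0 q) + a 5 * ((x ^ 5 + 1) * thetaMoment 5 0 q) := by
  have hx0 : x ≠ 0 := by rintro rfl; norm_num at hx
  have e1 : ∀ n : ℤ, ∀ r : ℕ, x ^ (7 * n + r) = x ^ r := by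
    intro n r
    have : x ^ (7 : ℤ) = 1 := by exact_mod_cast hx
    rw [zpow_add₀ hx0, zpow_mul, this, one_zpow, one_mul, zpow_natCast]
  have h := ha.tsum_mul h0 (ha.rapidDecay.summable_norm hx0).of_norm
  rw [laurentEval, h, thetaMoment, thetaMoment, thetaMoment]
  simp only [← tsum_mul_left (a := (_ : ℂ) + _)]
  congr 1
  · congr 1
    · congr 2
      ext n
      have := e1 n 3
      have h2 := e1 (-n) 2
      rw [show 5 - (7 * n + 3) = 7 * (-n) + (2 : ℕ) by push_cast; ring, h2]
      norm_num at this
      rw [this]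
      ring
    · congr 2
      ext n
      have := e1 n 4
      have h2 := e1 (-n) 1
      rw [show 5 - (7 * n + 4) = 7 * (-n) + (1 : ℕ) by push_cast; ring, h2]
      norm_num at this
      rw [this]
      ring
  · congr 2
    ext n
    have := e1 n 5
    have h2 := e1 (-n) 0
    rw [show 5 - (7 * n + 5) = 7 * (-n) + (0 : ℕ) by push_cast; ring, h2]
    norm_num at this
    rw [this]
    ring

lemma IsEvenTheta.tsum_mul_pow {q : ℂ} {a : ℤ → ℂ} (ha : IsEvenTheta q a) (h0 : q ≠ 0) {j : ℕ}
    (hj : Even j) (hs : Summable fun k : ℤ => a k * (2 * k - 5) ^ j) :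
    ∑' k : ℤ, a k * (2 * k - 5) ^ j = a 3 * (2 * thetaMoment 1 j q) +
      a 4 * (2 * thetaMoment 3 j q) + a 5 * (2 * thetaMoment 5 j q) := by
  rw [ha.tsum_mul h0 hs, thetaMoment, thetaMoment, thetaMoment]
  simp only [← tsum_mul_left (a := (2 : ℂ))]
  congr 1
  · congr 1
    · congr 2
      ext n
      rw [← hj.neg_pow (2 * ((5 - (7 * n + 3) : ℤ) : ℂ) - 5)]
      push_cast
      ring
    · congr 2
      ext n
      rw [← hj.neg_pow (2 * ((5 - (7 * n + 4) : ℤ) : ℂ) - 5)]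
      push_cast
      ring
  · congr 2
    ext n
    rw [← hj.neg_pow (2 * ((5 - (7 * n + 5) : ℤ) : ℂ) - 5)]
    push_cast
    ring

/-- The exponential form `∑ b k e^{(2k-5)u}` of a Laurent series, centred at its reflection point. -/
noncomputable def expSum (b : ℤ → ℂ) (u : ℂ) : ℂ := ∑' k : ℤ, b k * Complex.exp ((2 * k - 5) * u)

lemma exp_two_mul_sub_five (M : ℝ) (k : ℤ) :
    Real.exp ((2 * k - 5) * M) = Real.exp (-5 * M) * Real.exp (2 * M) ^ k := by
  rw [← Real.rpow_intCast, ← Real.exp_mul, ← Real.exp_add]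
  congr 1
  ring

lemma RapidDecay.mul_of_norm_le {b c : ℤ → ℂ} (hb : RapidDecay b)
    (hc : ∀ k : ℤ, ‖c k‖ ≤ Real.exp (2 * k - 5) + Real.exp (-(2 * k - 5))) :
    RapidDecay fun k => b k * c k := by
  intro R hR
  refine Summable.of_nonneg_of_le (fun k => by positivity) (fun k => ?_)
    (((hb (Real.exp (2 * 1) * R) (by positivity)).mul_left (Real.exp (-5 * 1))).add
      ((hb (Real.exp (2 * -1) * R) (by positivity)).mul_left (Real.exp (-5 * -1))))
  have h1 := exp_two_mul_sub_five 1 k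
  have h2 := exp_two_mul_sub_five (-1) k
  rw [mul_one] at h1
  rw [mul_neg_one] at h2
  calc ‖b k * c k‖ * R ^ k = ‖b k‖ * R ^ k * ‖c k‖ := by rw [norm_mul]; ring
    _ ≤ ‖b k‖ * R ^ k * (Real.exp (2 * k - 5) + Real.exp (-(2 * k - 5))) := by
      gcongr
      exact hc k
    _ = _ := by
      rw [h1, h2, mul_zpow, mul_zpow]
      ring

lemma RapidDecay.mul_linear {b : ℤ → ℂ} (hb : RapidDecay b) :
    RapidDecay fun k => b k * (2 * k - 5) := by
  refine hb.mul_of_norm_le fun k => ?_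
  have h : ‖(2 * k - 5 : ℂ)‖ = |(2 * k - 5 : ℝ)| := by
    rw [← Real.norm_eq_abs, ← Complex.norm_real]
    push_cast
    rfl
  rw [h]
  rcases abs_cases (2 * k - 5 : ℝ) with ⟨h, -⟩ | ⟨h, -⟩ <;> rw [h]
  · linarith [Real.add_one_le_exp (2 * k - 5 : ℝ), Real.exp_pos (-(2 * k - 5 : ℝ))]
  · linarith [Real.add_one_le_exp (-(2 * k - 5 : ℝ)), Real.exp_pos (2 * k - 5 : ℝ)]

lemma RapidDecay.mul_linear_pow {b : ℤ → ℂ} (hb : RapidDecay b) (j : ℕ) :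
    RapidDecay fun k => b k * (2 * k - 5) ^ j := by
  induction j with
  | zero => simpa using hb
  | succ j ih => simpa only [pow_succ, mul_assoc] using ih.mul_linear

lemma RapidDecay.summable_bound {b : ℤ → ℂ} (hb : RapidDecay b) (M : ℝ) :
    Summable fun k : ℤ => ‖b k‖ * (Real.exp ((2 * k - 5) * M) + Real.exp ((2 * k - 5) * -M)) := by
  refine (((hb (Real.exp (2 * M)) (by positivity)).mul_left (Real.exp (-5 * M))).add
      ((hb (Real.exp (2 * -M)) (by positivity)).mul_left (Real.exp (-5 * -M)))).congr fun k => ?_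
  rw [exp_two_mul_sub_five, exp_two_mul_sub_five]
  ring

lemma norm_exp_linear_le {u : ℂ} {M : ℝ} (hu : ‖u‖ ≤ M) (k : ℤ) :
    ‖Complex.exp ((2 * k - 5) * u)‖ ≤
      Real.exp ((2 * k - 5) * M) + Real.exp ((2 * k - 5) * -M) := by
  have h := abs_le.1 ((Complex.abs_re_le_norm u).trans hu)
  have hre : ((2 * k - 5 : ℂ) * u).re = (2 * k - 5 : ℝ) * u.re := by
    have : (2 * k - 5 : ℂ) = ((2 * k - 5 : ℝ) : ℂ) := by push_cast; rfl
    rw [this, Complex.re_ofReal_mul]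
  rw [Complex.norm_exp, hre]
  rcases le_total 0 (2 * k - 5 : ℝ) with hk | hk
  · have : Real.exp ((2 * k - 5) * u.re) ≤ Real.exp ((2 * k - 5) * M) :=
      Real.exp_le_exp.2 (mul_le_mul_of_nonneg_left h.2 hk)
    linarith [Real.exp_pos ((2 * k - 5 : ℝ) * -M)]
  · have : Real.exp ((2 * k - 5) * u.re) ≤ Real.exp ((2 * k - 5) * -M) :=
      Real.exp_le_exp.2 (mul_le_mul_of_nonpos_left h.1 hk)
    linarith [Real.exp_pos ((2 * k - 5 : ℝ) * M)]

lemma RapidDecay.hasDerivAt_expSum {b : ℤ → ℂ} (hb : RapidDecay b) (u : ℂ) :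
    HasDerivAt (expSum b) (expSum (fun k => b k * (2 * k - 5)) u) u := by
  have hu : u ∈ Metric.ball (0 : ℂ) (‖u‖ + 1) := by simp
  refine hasDerivAt_tsum_of_isPreconnected (𝕜 := ℂ)
    (g := fun (k : ℤ) (u : ℂ) => b k * Complex.exp ((2 * k - 5) * u))
    (g' := fun (k : ℤ) (u : ℂ) => b k * (2 * k - 5) * Complex.exp ((2 * k - 5) * u))
    (hb.mul_linear.summable_bound (‖u‖ + 1)) Metric.isOpen_ball
    (convex_ball _ _).isPreconnected (fun k y _ => ?_) (fun k y hy => ?_) hu ?_ hu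
  · have h1 : HasDerivAt (fun y : ℂ => (2 * k - 5 : ℂ) * y) (2 * k - 5 : ℂ) y := by
      simpa using (hasDerivAt_id y).const_mul (2 * k - 5 : ℂ)
    exact (h1.cexp.const_mul (b k)).congr_deriv (by ring)
  · rw [norm_mul]
    gcongr
    exact norm_exp_linear_le (by simpa using (mem_ball_zero_iff.1 hy).le) k
  · refine Summable.of_norm_bounded (hb.summable_bound (‖u‖ + 1)) fun k => ?_
    rw [norm_mul]
    gcongr
    exact norm_exp_linear_le (by linarith) k

lemma expSum_eq (a : ℤ → ℂ) (u : ℂ) :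
    expSum a u = Complex.exp (-5 * u) * laurentEval a (Complex.exp (2 * u)) := by
  rw [expSum, laurentEval, ← tsum_mul_left]
  refine tsum_congr fun k => ?_
  rw [← Complex.exp_int_mul, mul_left_comm, ← Complex.exp_add]
  congr 2
  ring

lemma RapidDecay.differentiable_expSum {b : ℤ → ℂ} (hb : RapidDecay b) :
    Differentiable ℂ (expSum b) := fun u => (hb.hasDerivAt_expSum u).differentiableAt

/-- Differentiation lowers the order of a zero at the origin. -/
lemma exists_eq_pow_mul_of_hasDerivAt {F F' K : ℂ → ℂ} {n : ℕ} (hK : Differentiable ℂ K)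
    (hF : ∀ u, HasDerivAt F (F' u) u) (h : ∀ u, F u = u ^ (n + 1) * K u) :
    ∃ L : ℂ → ℂ, Differentiable ℂ L ∧ (∀ u, F' u = u ^ n * L u) ∧ L 0 = (n + 1) * K 0 := by
  refine ⟨fun u => (n + 1) * K u + u * deriv K u, ?_, fun u => ?_, by simp⟩
  · exact (hK.const_mul _).add (differentiable_id.mul hK.deriv)
  · have h1 := ((hasDerivAt_pow (n + 1) u).mul (hK u).hasDerivAt)
    rw [(hF u).unique (h1.congr_of_eventuallyEq (Eventually.of_forall h))]
    push_cast
    ring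

lemma expSum_zero (b : ℤ → ℂ) : expSum b 0 = ∑' k, b k := by simp [expSum]

lemma RapidDecay.hasDerivAt_expSum_pow {a : ℤ → ℂ} (ha : RapidDecay a) (j : ℕ) (u : ℂ) :
    HasDerivAt (expSum fun k => a k * (2 * k - 5) ^ j)
      (expSum (fun k => a k * (2 * k - 5) ^ (j + 1)) u) u := by
  simpa only [pow_succ, mul_assoc] using (ha.mul_linear_pow j).hasDerivAt_expSum u

lemma RapidDecay.moments_of_order_two {a : ℤ → ℂ} (ha : RapidDecay a) {K : ℂ → ℂ}
    (hK : Differentiable ℂ K) (h : ∀ u, expSum a u = u ^ 2 * K u) :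
    ∑' k : ℤ, a k * (2 * k - 5) ^ 0 = 0 ∧ ∑' k : ℤ, a k * (2 * k - 5) ^ 2 = 2 * K 0 := by
  have h0 : ∀ u, expSum (fun k => a k * (2 * k - 5) ^ 0) u = u ^ (1 + 1) * K u := by simpa using h
  obtain ⟨K1, hK1, h1, e1⟩ := exists_eq_pow_mul_of_hasDerivAt hK (ha.hasDerivAt_expSum_pow 0) h0
  obtain ⟨K2, hK2, h2, e2⟩ :=
    exists_eq_pow_mul_of_hasDerivAt (n := 0) hK1 (ha.hasDerivAt_expSum_pow 1) h1
  rw [← expSum_zero, ← expSum_zero, h0, h2, e2, e1]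
  norm_num

lemma RapidDecay.moments_of_order_four {a : ℤ → ℂ} (ha : RapidDecay a) {K : ℂ → ℂ}
    (hK : Differentiable ℂ K) (h : ∀ u, expSum a u = u ^ 4 * K u) :
    ∑' k : ℤ, a k * (2 * k - 5) ^ 0 = 0 ∧ ∑' k : ℤ, a k * (2 * k - 5) ^ 2 = 0 ∧
      ∑' k : ℤ, a k * (2 * k - 5) ^ 4 = 24 * K 0 := by
  have h0 : ∀ u, expSum (fun k => a k * (2 * k - 5) ^ 0) u = u ^ (3 + 1) * K u := by simpa using h
  obtain ⟨K1, hK1, h1, e1⟩ := exists_eq_pow_mul_of_hasDerivAt hK (ha.hasDerivAt_expSum_pow 0) h0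
  obtain ⟨K2, hK2, h2, e2⟩ :=
    exists_eq_pow_mul_of_hasDerivAt (n := 2) hK1 (ha.hasDerivAt_expSum_pow 1) h1
  obtain ⟨K3, hK3, h3, e3⟩ :=
    exists_eq_pow_mul_of_hasDerivAt (n := 1) hK2 (ha.hasDerivAt_expSum_pow 2) h2
  obtain ⟨K4, hK4, h4, e4⟩ :=
    exists_eq_pow_mul_of_hasDerivAt (n := 0) hK3 (ha.hasDerivAt_expSum_pow 3) h3
  rw [← expSum_zero, ← expSum_zero, ← expSum_zero, h0, h2, h4, e4, e3, e2, e1]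
  norm_num
  ring

lemma differentiable_theta_exp {q α : ℂ} (hq : ‖q‖ < 1) (h0 : q ≠ 0) (hα : α ≠ 0) :
    Differentiable ℂ fun u => theta q (α * Complex.exp (2 * u)) := by
  have h := (rapidDecay_thetaScaled hq h0 hα).differentiable_expSum
  have e : (fun u => theta q (α * Complex.exp (2 * u))) =
      fun u => Complex.exp (5 * u) * expSum (thetaScaled q α) u := by
    ext u
    rw [expSum_eq, ← mul_assoc, ← Complex.exp_add, laurentEval_thetaScaled]
    simp
  rw [e]
  fun_prop

lemma theta_one {q : ℂ} (hq : ‖q‖ < 1) (h0 : q ≠ 0) : theta q 1 = 0 := by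
  rw [theta_eq_prod hq h0 one_ne_zero, qPoch_eq_mul hq 1]
  simp

lemma theta_inv {q x : ℂ} (hq : ‖q‖ < 1) (h0 : q ≠ 0) (hx : x ≠ 0) :
    theta q x⁻¹ = -x⁻¹ * theta q x := by
  rw [theta_eq_prod hq h0 hx, theta_eq_prod hq h0 (inv_ne_zero hx), inv_inv, qPoch_eq_mul hq x,
    qPoch_eq_mul hq x⁻¹]
  field_simp
  ring

/-- The quotient of `theta q (e^{2u})` by `u`. -/
noncomputable def thetaSlope (q : ℂ) : ℂ → ℂ := dslope (fun u => theta q (Complex.exp (2 * u))) 0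

lemma differentiable_thetaSlope {q : ℂ} (hq : ‖q‖ < 1) (h0 : q ≠ 0) :
    Differentiable ℂ (thetaSlope q) := by
  have h := differentiable_theta_exp hq h0 one_ne_zero
  simp only [one_mul] at h
  rw [← differentiableOn_univ] at h ⊢
  exact (Complex.differentiableOn_dslope univ_mem).2 h

lemma theta_exp_eq {q : ℂ} (hq : ‖q‖ < 1) (h0 : q ≠ 0) (u : ℂ) :
    theta q (Complex.exp (2 * u)) = u * thetaSlope q u := by
  have := sub_smul_dslope (fun u => theta q (Complex.exp (2 * u))) 0 u
  simp [theta_one hq h0] at this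
  exact this.symm

lemma thetaSlope_zero {q : ℂ} (hq : ‖q‖ < 1) (h0 : q ≠ 0) : thetaSlope q 0 = -2 * qPoch q q ^ 3 := by
  have h1 : HasDerivAt (fun u : ℂ => 1 - Complex.exp (2 * u)) (-2) 0 := by
    have := (((hasDerivAt_id (0 : ℂ)).const_mul 2).cexp).const_sub 1
    simpa using this
  have h2 : HasDerivAt (fun u : ℂ => theta q (Complex.exp (2 * u))) (-2 * qPoch q q ^ 3) 0 := by
    have hc : ContinuousAt (fun u : ℂ => qPoch q q * qPoch q (Complex.exp (2 * u) * q) *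
        qPoch q ((Complex.exp (2 * u))⁻¹ * q)) 0 := by
      have := continuous_qPoch hq
      simp only [← Complex.exp_neg]
      fun_prop
    rw [hasDerivAt_iff_tendsto_slope] at h1 ⊢
    have h3 := h1.mul (hc.tendsto.mono_left nhdsWithin_le_nhds)
    simp only [mul_zero, Complex.exp_zero, one_mul, inv_one] at h3
    convert h3 using 2 with u
    · rw [slope_def_field, slope_def_field, theta_eq_prod hq h0 (Complex.exp_ne_zero _),
        qPoch_eq_mul hq (Complex.exp (2 * u)), mul_zero, Complex.exp_zero, theta_one hq h0]
      ring
    · ring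
  rw [thetaSlope, dslope_same, h2.deriv]

lemma qPoch_eq_prod_range {q : ℂ} (hq : ‖q‖ < 1) (x : ℂ) {N : ℕ} (hN : 0 < N) :
    qPoch q x = ∏ r ∈ Finset.range N, qPoch (q ^ N) (x * q ^ r) := by
  have hqN : ‖q ^ N‖ < 1 := by
    rw [norm_pow]
    exact pow_lt_one₀ (norm_nonneg _) hq hN.ne'
  have h1 : Tendsto (fun M : ℕ => ∏ i ∈ Finset.range (M * N), (1 - x * q ^ i)) atTop
      (𝓝 (qPoch q x)) :=
    (tendsto_qPoch hq x).comp (tendsto_id.atTop_mul_const' hN)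
  have h2 := tendsto_finsetProd (Finset.range N) fun r _ => tendsto_qPoch hqN (x * q ^ r)
  refine tendsto_nhds_unique h1 (h2.congr fun M => ?_)
  induction M with
  | zero => simp
  | succ M ih =>
    simp only [Finset.prod_range_succ _ M] at ih ⊢
    rw [Finset.prod_mul_distrib, ih, Nat.succ_mul, Finset.prod_range_add]
    congr 1
    refine Finset.prod_congr rfl fun r _ => ?_
    ring

lemma qPoch_mul_qPoch_neg {q : ℂ} (hq : ‖q‖ < 1) (x : ℂ) :
    qPoch q x * qPoch q (-x) = qPoch (q ^ 2) (x ^ 2) := by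
  rw [qPoch, qPoch, qPoch, ← (multipliable_qPoch hq x).tprod_mul (multipliable_qPoch hq (-x))]
  refine tprod_congr fun n => ?_
  ring

lemma prod_one_sub_root_mul {w : ℂ} (hw : 1 + w + w ^ 2 + w ^ 3 + w ^ 4 + w ^ 5 + w ^ 6 = 0)
    (z : ℂ) : ∏ k ∈ Finset.range 7, (1 - w ^ k * z) = 1 - z ^ 7 := by
  simp only [Finset.prod_range_succ, Finset.prod_range_zero]
  linear_combination (z ^ 1 * (-1 * w ^ 0) + z ^ 2 * (1 * w ^ 1 + 1 * w ^ 3 + 1 * w ^ 5) +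
    z ^ 3 * (-1 * w ^ 3 + -1 * w ^ 5 + -1 * w ^ 6 + -1 * w ^ 7 + -1 * w ^ 9) +
    z ^ 4 * (1 * w ^ 6 + 1 * w ^ 8 + 1 * w ^ 9 + 1 * w ^ 10 + 1 * w ^ 12) +
    z ^ 5 * (-1 * w ^ 10 + -1 * w ^ 12 + -1 * w ^ 14) + z ^ 6 * (1 * w ^ 15) +
    z ^ 7 * (1 * w ^ 0 + -1 * w ^ 1 + 1 * w ^ 7 + -1 * w ^ 8 + 1 * w ^ 14 + -1 * w ^ 15)) * hw

lemma prod_qPoch_root_mul {q w : ℂ} (hq : ‖q‖ < 1)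
    (hw : 1 + w + w ^ 2 + w ^ 3 + w ^ 4 + w ^ 5 + w ^ 6 = 0) (y : ℂ) :
    ∏ k ∈ Finset.range 7, qPoch q (w ^ k * y) = qPoch (q ^ 7) (y ^ 7) := by
  simp only [qPoch]
  rw [← Multipliable.tprod_finsetProd fun k _ => multipliable_qPoch hq (w ^ k * y)]
  refine tprod_congr fun n => ?_
  simp only [mul_assoc, prod_one_sub_root_mul hw]
  ring

/-- The duplication formula for the theta function. -/
lemma torsionFactor_mul_theta {q p x : ℂ} (hq : ‖q‖ < 1) (h0 : q ≠ 0) (hp : p ^ 2 = q)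
    (hx : x ≠ 0) : torsionFactor q p x * theta q x = qPoch q q ^ 3 * theta q (x ^ 2) := by
  have hp0 : p ≠ 0 := by
    rintro rfl
    exact h0 (by simpa using hp.symm)
  have hq2 : ‖q ^ 2‖ < 1 := by
    rw [norm_pow]
    exact pow_lt_one₀ (norm_nonneg _) hq two_ne_zero
  have key : ∀ y : ℂ, qPoch q y * qPoch q (-y) * (qPoch q (p * y) * qPoch q (-(p * y))) =
      qPoch q (y ^ 2) := by
    intro y
    rw [qPoch_mul_qPoch_neg hq, qPoch_mul_qPoch_neg hq, qPoch_eq_prod_range hq (y ^ 2) (Nat.zero_lt_two),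
      mul_pow, hp]
    rw [Finset.prod_range_succ, Finset.prod_range_one, pow_zero, pow_one, mul_one, mul_comm q]
  have hpq : p⁻¹ * q = p := by
    rw [← hp]
    field_simp
  have key2 : qPoch q (x⁻¹ * q) * qPoch q (-(x⁻¹ * q)) * (qPoch q (p * x⁻¹) * qPoch q (-(p * x⁻¹)))
      = qPoch q ((x ^ 2)⁻¹ * q) := by
    rw [qPoch_mul_qPoch_neg hq, qPoch_mul_qPoch_neg hq, qPoch_eq_prod_range hq _ Nat.zero_lt_two,
      mul_pow, mul_pow, hp]
    rw [Finset.prod_range_succ, Finset.prod_range_one, mul_comm]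
    congr 2 <;> ring
  rw [torsionFactor, theta_eq_prod hq h0 hx, theta_eq_prod hq h0 (pow_ne_zero 2 hx),
    theta_eq_prod hq h0 (mul_ne_zero hp0 hx), theta_eq_prod hq h0 (mul_ne_zero (neg_ne_zero.2 hp0) hx),
    theta_eq_prod hq h0 (mul_ne_zero (by norm_num) hx), ← key x, ← key2]
  have e1 : (p * x)⁻¹ * q = p * x⁻¹ := by rw [mul_inv, mul_right_comm, hpq]
  have e2 : (-p * x)⁻¹ * q = -(p * x⁻¹) := by rw [neg_mul, inv_neg, neg_mul, e1]
  have e3 : (-1 * x)⁻¹ * q = -(x⁻¹ * q) := by rw [neg_one_mul, inv_neg, neg_mul]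
  rw [e1, e2, e3, neg_mul, neg_one_mul]
  ring

lemma torsionFactor_one {q p : ℂ} (hq : ‖q‖ < 1) (h0 : q ≠ 0) (hp : p ^ 2 = q) :
    torsionFactor q p 1 = 2 * qPoch q q ^ 3 := by
  have hp0 : p ≠ 0 := by
    rintro rfl
    exact h0 (by simpa using hp.symm)
  have hS := (differentiable_thetaSlope hq h0).continuous
  have hH : Continuous fun u : ℂ => torsionFactor q p (Complex.exp (2 * u)) := by
    have h1 := (differentiable_theta_exp hq h0 hp0).continuous
    have h2 := (differentiable_theta_exp hq h0 (neg_ne_zero.2 hp0)).continuous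
    have h3 := (differentiable_theta_exp hq h0 (show (-1 : ℂ) ≠ 0 by norm_num)).continuous
    exact (h1.mul h2).mul h3
  have h : (fun u : ℂ => torsionFactor q p (Complex.exp (2 * u)) * thetaSlope q u) =
      fun u : ℂ => qPoch q q ^ 3 * (2 * thetaSlope q (2 * u)) := by
    refine Continuous.ext_on (dense_compl_singleton (0 : ℂ)) (hH.mul hS) (by fun_prop)
      fun u hu => ?_
    have hu : u ≠ 0 := hu
    apply mul_left_cancel₀ hu
    have h1 := torsionFactor_mul_theta hq h0 hp (Complex.exp_ne_zero (2 * u))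
    rw [← Complex.exp_nat_mul, show ((2 : ℕ) : ℂ) * (2 * u) = 2 * (2 * u) by norm_num,
      theta_exp_eq hq h0, theta_exp_eq hq h0] at h1
    linear_combination h1
  have h1 := congrFun h 0
  have h2 : thetaSlope q 0 ≠ 0 := by
    rw [thetaSlope_zero hq h0]
    exact mul_ne_zero (by norm_num) (pow_ne_zero _ (qPoch_self_ne_zero hq))
  simp only [mul_zero, Complex.exp_zero] at h1
  apply mul_right_cancel₀ h2
  rw [h1]
  ring

lemma prod_theta_root {q w : ℂ} (hq : ‖q‖ < 1) (h0 : q ≠ 0)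
    (hw : 1 + w + w ^ 2 + w ^ 3 + w ^ 4 + w ^ 5 + w ^ 6 = 0) :
    theta q w * theta q (w ^ 2) * theta q (w ^ 3) * theta q (w ^ 4) * theta q (w ^ 5) *
      theta q (w ^ 6) = 7 * qPoch q q ^ 4 * qPoch (q ^ 7) (q ^ 7) ^ 2 := by
  have w7 : w ^ 7 = 1 := by linear_combination (w - 1) * hw
  have hw0 : w ≠ 0 := by
    rintro rfl
    norm_num at hw
  have hP := prod_qPoch_root_mul hq hw q
  simp only [Finset.prod_range_succ, Finset.prod_range_zero, pow_zero, one_mul, pow_one] at hP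
  have i1 : w⁻¹ = w ^ 6 := inv_eq_of_mul_eq_one_right (by rw [← w7]; ring)
  have i2 : (w ^ 2)⁻¹ = w ^ 5 := inv_eq_of_mul_eq_one_right (by rw [← w7]; ring)
  have i3 : (w ^ 3)⁻¹ = w ^ 4 := inv_eq_of_mul_eq_one_right (by rw [← w7]; ring)
  have i4 : (w ^ 4)⁻¹ = w ^ 3 := inv_eq_of_mul_eq_one_right (by rw [← w7]; ring)
  have i5 : (w ^ 5)⁻¹ = w ^ 2 := inv_eq_of_mul_eq_one_right (by rw [← w7]; ring)
  have i6 : (w ^ 6)⁻¹ = w := inv_eq_of_mul_eq_one_right (by rw [← w7]; ring)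
  have h7 : (1 - w) * (1 - w ^ 2) * (1 - w ^ 3) * (1 - w ^ 4) * (1 - w ^ 5) * (1 - w ^ 6) = 7 := by
    linear_combination (-6 * w ^ 0 + 5 * w ^ 1 + 1 * w ^ 3 + 1 * w ^ 5 + -1 * w ^ 6 + -4 * w ^ 7 +
        3 * w ^ 8 + -1 * w ^ 9 + 1 * w ^ 10 + 1 * w ^ 12 + -2 * w ^ 14 + 1 * w ^ 15) * hw
  rw [theta_eq_prod hq h0 hw0]
  iterate 5 rw [theta_eq_prod hq h0 (pow_ne_zero _ hw0)]
  rw [i1, i2, i3, i4, i5, i6, qPoch_eq_mul hq w, qPoch_eq_mul hq (w ^ 2), qPoch_eq_mul hq (w ^ 3),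
    qPoch_eq_mul hq (w ^ 4), qPoch_eq_mul hq (w ^ 5), qPoch_eq_mul hq (w ^ 6), ← hP, ← h7]
  ring

lemma norm_pow_lt_one {q : ℂ} (hq : ‖q‖ < 1) {n : ℕ} (hn : n ≠ 0) : ‖q ^ n‖ < 1 := by
  rw [norm_pow]
  exact pow_lt_one₀ (norm_nonneg _) hq hn

lemma thetaMoment_zero_eq {q : ℂ} (hq : ‖q‖ < 1) (h0 : q ≠ 0) {ρ : ℤ} {a b : ℕ}
    (hρ : |ρ| ≤ 5) (hb : 2 * (b : ℤ) = 7 + ρ) (hab : a + b = 7) :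
    thetaMoment ρ 0 q = qPoch (q ^ 7) (q ^ 7) * qPoch (q ^ 7) (q ^ b) * qPoch (q ^ 7) (q ^ a) := by
  have e : (q ^ b)⁻¹ * q ^ 7 = q ^ a := by
    rw [← hab, pow_add, mul_comm, mul_assoc, mul_inv_cancel₀ (pow_ne_zero _ h0), mul_one]
  rw [← e, ← theta_eq_prod (norm_pow_lt_one hq (by norm_num)) (pow_ne_zero _ h0)
    (pow_ne_zero _ h0), theta, laurentEval, thetaMoment]
  refine tsum_congr fun n => ?_
  rw [thetaCoeff, ← zpow_eq_pow_thetaExp hρ, pow_zero, mul_one, mul_assoc, ← zpow_natCast q 7,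
    ← zpow_natCast q b, ← zpow_mul, ← zpow_mul, ← zpow_add₀ h0]
  congr 2
  obtain ⟨m, hm⟩ := Int.even_mul_pred_self n
  have h1 : n * (n - 1) / 2 = m := by omega
  have h2 : 7 * n ^ 2 + ρ * n = 2 * (7 * m + b * n) := by
    rw [show ρ = 2 * (b : ℤ) - 7 by omega]
    linear_combination 7 * hm
  rw [h1, h2, Int.mul_ediv_cancel_left _ two_ne_zero]
  push_cast
  ring

lemma prod_thetaMoment_zero {q : ℂ} (hq : ‖q‖ < 1) (h0 : q ≠ 0) :
    thetaMoment 1 0 q * thetaMoment 3 0 q * thetaMoment 5 0 q =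
      qPoch (q ^ 7) (q ^ 7) ^ 2 * qPoch q q := by
  rw [thetaMoment_zero_eq hq h0 (a := 3) (b := 4) (by norm_num) (by norm_num) (by norm_num),
    thetaMoment_zero_eq hq h0 (a := 2) (b := 5) (by norm_num) (by norm_num) (by norm_num),
    thetaMoment_zero_eq hq h0 (a := 1) (b := 6) (by norm_num) (by norm_num) (by norm_num),
    qPoch_eq_prod_range hq q (N := 7) (by norm_num)]
  simp only [Finset.prod_range_succ, Finset.prod_range_zero, ← pow_succ']
  ring

lemma IsEvenTheta.tsum_moment {q : ℂ} {a : ℤ → ℂ} (ha : IsEvenTheta q a) (h0 : q ≠ 0) {j : ℕ}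
    (hj : Even j) : ∑' k : ℤ, a k * (2 * k - 5) ^ j = a 3 * (2 * thetaMoment 1 j q) +
      a 4 * (2 * thetaMoment 3 j q) + a 5 * (2 * thetaMoment 5 j q) :=
  ha.tsum_mul_pow h0 hj (by
    simpa using ((ha.rapidDecay.mul_linear_pow j).summable_norm one_ne_zero).of_norm)

/-- The Wronskian-type determinant of the moments of the three mod 7 theta series. -/
theorem det_thetaMoment {q : ℂ} (hq : ‖q‖ < 1) (h0 : q ≠ 0) :
    Matrix.det !![thetaMoment 1 0 q, thetaMoment 1 2 q, thetaMoment 1 4 q;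
      thetaMoment 3 0 q, thetaMoment 3 2 q, thetaMoment 3 4 q;
      thetaMoment 5 0 q, thetaMoment 5 2 q, thetaMoment 5 4 q] = 3072 * qPoch q q ^ 15 := by
  obtain ⟨p, hp⟩ : ∃ p : ℂ, p ^ 2 = q := IsAlgClosed.exists_pow_nat_eq q two_pos
  have hζ := Complex.isPrimitiveRoot_exp 7 (by norm_num)
  set w := Complex.exp (2 * Real.pi * Complex.I / (7 : ℕ))
  have hw : 1 + w + w ^ 2 + w ^ 3 + w ^ 4 + w ^ 5 + w ^ 6 = 0 := by
    have := hζ.geom_sum_eq_zero (by norm_num)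
    simpa [Finset.sum_range_succ] using this
  have w7 : w ^ 7 = 1 := hζ.pow_eq_one
  have hw0 : w ≠ 0 := Complex.exp_ne_zero _
  have i1 : w⁻¹ = w ^ 6 := inv_eq_of_mul_eq_one_right (by rw [← w7]; ring)
  have i2 : (w ^ 2)⁻¹ = w ^ 5 := inv_eq_of_mul_eq_one_right (by rw [← w7]; ring)
  have i3 : (w ^ 3)⁻¹ = w ^ 4 := inv_eq_of_mul_eq_one_right (by rw [← w7]; ring)
  have t6 : theta q (w ^ 6) = -w ^ 6 * theta q w := by rw [← i1, theta_inv hq h0 hw0]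
  have t5 : theta q (w ^ 5) = -w ^ 5 * theta q (w ^ 2) := by
    rw [← i2, theta_inv hq h0 (pow_ne_zero _ hw0)]
  have t4 : theta q (w ^ 4) = -w ^ 4 * theta q (w ^ 3) := by
    rw [← i3, theta_inv hq h0 (pow_ne_zero _ hw0)]
  have hT := prod_theta_root hq h0 hw
  have d1 := torsionFactor_mul_theta hq h0 hp hw0
  have d2 := torsionFactor_mul_theta hq h0 hp (pow_ne_zero 2 hw0)
  have d3 := torsionFactor_mul_theta hq h0 hp (pow_ne_zero 3 hw0)
  have H1 := torsionFactor_one hq h0 hp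
  have hS0 := thetaSlope_zero hq h0
  have hS := differentiable_thetaSlope hq h0
  have hth0 := theta_one hq h0
  have hΘ := prod_thetaMoment_zero hq h0
  have hφ := qPoch_self_ne_zero hq
  have hψ := qPoch_self_ne_zero (norm_pow_lt_one hq (n := 7) (by norm_num))
  have hθ : theta q w * theta q (w ^ 2) * theta q (w ^ 3) ≠ 0 := by
    have : 7 * qPoch q q ^ 4 * qPoch (q ^ 7) (q ^ 7) ^ 2 ≠ 0 :=
      mul_ne_zero (mul_ne_zero (by norm_num) (pow_ne_zero _ hφ)) (pow_ne_zero _ hψ)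
    rw [← hT] at this
    exact fun h => this (by rw [h]; ring)
  set φ := qPoch q q
  set ψ := qPoch (q ^ 7) (q ^ 7)
  rw [← pow_mul] at d2 d3
  obtain ⟨a, ha, va⟩ := exists_isEvenTheta hq h0 hp one_ne_zero one_ne_zero
  obtain ⟨b, hb, vb⟩ := exists_isEvenTheta hq h0 hp one_ne_zero hw0
  obtain ⟨c, hc, vc⟩ := exists_isEvenTheta hq h0 hp hw0 (pow_ne_zero 2 hw0)
  simp only [inv_one, one_mul, i1, i2] at va vb vc
  have hTor : Differentiable ℂ fun u => torsionFactor q p (Complex.exp (2 * u)) := by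
    have hp0 : p ≠ 0 := by
      rintro rfl
      exact h0 (by simpa using hp.symm)
    exact ((differentiable_theta_exp hq h0 hp0).mul
      (differentiable_theta_exp hq h0 (neg_ne_zero.2 hp0))).mul
      (differentiable_theta_exp hq h0 (show (-1 : ℂ) ≠ 0 by norm_num))
  have hE : ∀ n : ℕ, Differentiable ℂ fun u => theta q (w ^ n * Complex.exp (2 * u)) := fun n =>
    differentiable_theta_exp hq h0 (pow_ne_zero n hw0)
  have hE1 := hE 1
  rw [pow_one] at hE1
  obtain ⟨a0, a2, a4⟩ := ha.rapidDecay.moments_of_order_four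
    (K := fun u => Complex.exp (-5 * u) * torsionFactor q p (Complex.exp (2 * u)) *
      thetaSlope q u ^ 4) (by fun_prop) fun u => by
      rw [expSum_eq, va _ (Complex.exp_ne_zero _), theta_exp_eq hq h0]
      ring
  obtain ⟨b0, b2⟩ := hb.rapidDecay.moments_of_order_two
    (K := fun u => Complex.exp (-5 * u) * torsionFactor q p (Complex.exp (2 * u)) *
      thetaSlope q u ^ 2 * (theta q (w * Complex.exp (2 * u)) *
        theta q (w ^ 6 * Complex.exp (2 * u)))) (by have := hE 6; fun_prop) fun u => by
      rw [expSum_eq, vb _ (Complex.exp_ne_zero _), theta_exp_eq hq h0]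
      ring
  have c0 : ∑' k : ℤ, c k * (2 * k - 5) ^ 0 =
      2 * φ ^ 3 * (theta q w * theta q (w ^ 6) * (theta q (w ^ 2) * theta q (w ^ 5))) := by
    have h1 : laurentEval c 1 = ∑' k : ℤ, c k * (2 * k - 5) ^ 0 := by simp [laurentEval]
    rw [← h1, vc 1 one_ne_zero, H1]
    simp only [mul_one]
  simp only [mul_zero, Complex.exp_zero, mul_one, one_mul, hS0, H1] at a4 b2
  have hroot : ∀ j : ℕ, (w ^ j) ^ 7 = 1 := fun j => by rw [← pow_mul, mul_comm, pow_mul, w7,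
      one_pow]
  have z1 : theta q (w ^ 6 * w) = 0 := by rw [← pow_succ, w7, hth0]
  have z2 : theta q (w ^ 5 * w ^ 2) = 0 := by rw [← pow_add, w7, hth0]
  have b1 : laurentEval b (w ^ 1) = 0 := by
    rw [pow_one, vb _ hw0, z1]
    ring
  have c1 : laurentEval c (w ^ 1) = 0 := by
    rw [pow_one, vc _ hw0, z1]
    ring
  have c2 : laurentEval c (w ^ 2) = 0 := by
    rw [vc _ (pow_ne_zero 2 hw0), z2]
    ring
  have a1 : laurentEval a (w ^ 1) = φ ^ 3 * theta q w ^ 3 * theta q (w ^ 2) := by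
    rw [pow_one, va _ hw0]
    linear_combination theta q w ^ 3 * d1
  have bb : laurentEval b (w ^ 2) = -w ^ 4 * φ ^ 3 * theta q w * theta q (w ^ 2) *
      theta q (w ^ 3) ^ 2 := by
    have e1 : w * w ^ 2 = w ^ 3 := by ring
    have e2 : w ^ 6 * w ^ 2 = w := by linear_combination w * w7
    rw [vb _ (pow_ne_zero 2 hw0), e1, e2]
    rw [show 2 * 2 = 4 by norm_num, t4] at d2
    linear_combination theta q (w ^ 2) * theta q (w ^ 3) * theta q w * d2
  have cc : laurentEval c (w ^ 3) = -w * φ ^ 3 * theta q w ^ 2 * theta q (w ^ 2) ^ 2 := by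
    have e1 : w * w ^ 3 = w ^ 4 := by ring
    have e2 : w ^ 6 * w ^ 3 = w ^ 2 := by linear_combination w ^ 2 * w7
    have e3 : w ^ 2 * w ^ 3 = w ^ 5 := by ring
    have e4 : w ^ 5 * w ^ 3 = w := by linear_combination w * w7
    rw [vc _ (pow_ne_zero 3 hw0), e1, e2, e3, e4, t4, t5]
    rw [show 3 * 2 = 6 by norm_num, t6] at d3
    linear_combination w ^ 9 * theta q (w ^ 2) ^ 2 * theta q w * d3 -
      φ ^ 3 * theta q w ^ 2 * theta q (w ^ 2) ^ 2 * (w ^ 8 + w) * w7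
  rw [ha.tsum_moment h0 (by decide)] at a0 a2 a4
  rw [hb.tsum_moment h0 (by decide)] at b0 b2
  rw [hc.tsum_moment h0 (by decide)] at c0
  rw [ha.laurentEval_root h0 (hroot _)] at a1
  rw [hb.laurentEval_root h0 (hroot _)] at b1 bb
  rw [hc.laurentEval_root h0 (hroot _)] at c1 c2 cc
  simp only [neg_mul, t6, t5] at b2 c0
  have D1 := Matrix.det_mul !![a 3, a 4, a 5; b 3, b 4, b 5; c 3, c 4, c 5]
    !![((w ^ 1) ^ 3 + (w ^ 1) ^ 2) * thetaMoment 1 0 q, ((w ^ 2) ^ 3 + (w ^ 2) ^ 2) * thetaMoment 1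
        0 q,
        ((w ^ 3) ^ 3 + (w ^ 3) ^ 2) * thetaMoment 1 0 q;
      ((w ^ 1) ^ 4 + w ^ 1) * thetaMoment 3 0 q, ((w ^ 2) ^ 4 + w ^ 2) * thetaMoment 3 0 q,
        ((w ^ 3) ^ 4 + w ^ 3) * thetaMoment 3 0 q;
      ((w ^ 1) ^ 5 + 1) * thetaMoment 5 0 q, ((w ^ 2) ^ 5 + 1) * thetaMoment 5 0 q,
        ((w ^ 3) ^ 5 + 1) * thetaMoment 5 0 q]
  rw [Matrix.mul_fin_three, a1, b1, bb, c1, c2, cc] at D1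
  have D2 := Matrix.det_mul !![a 3, a 4, a 5; b 3, b 4, b 5; c 3, c 4, c 5]
    !![2 * thetaMoment 1 0 q, 2 * thetaMoment 1 2 q, 2 * thetaMoment 1 4 q;
      2 * thetaMoment 3 0 q, 2 * thetaMoment 3 2 q, 2 * thetaMoment 3 4 q;
      2 * thetaMoment 5 0 q, 2 * thetaMoment 5 2 q, 2 * thetaMoment 5 4 q]
  rw [Matrix.mul_fin_three, a0, a2, a4, b0, b2, c0] at D2
  generalize Matrix.det !![a 3, a 4, a 5; b 3, b 4, b 5; c 3, c 4, c 5] = A at D1 D2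
  simp only [Matrix.det_fin_three, Matrix.of_apply, Matrix.cons_val', Matrix.cons_val_zero,
    Matrix.cons_val_one, Matrix.cons_val] at D1 D2 ⊢
  rw [t4, t5, t6] at hT
  have hA : A = w ^ 3 * φ ^ 12 * theta q w ^ 4 * theta q (w ^ 2) ^ 2 := by
    have hk : 7 * w * (ψ ^ 2 * φ) ≠ 0 :=
      mul_ne_zero (mul_ne_zero (by norm_num) hw0) (mul_ne_zero (pow_ne_zero _ hψ) hφ)
    apply mul_right_cancel₀ hk
    have hX := congrArg (fun t => A * (thetaMoment 1 0 q * thetaMoment 3 0 q * thetaMoment 5 0 q) *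
        (t * (7 * w ^ 1 + -7 * w ^ 2 + 1 * w ^ 4 + -2 * w ^ 5 + 2 * w ^ 7 + 4 * w ^ 8 + -4 * w ^ 9
        + 1 * w ^ 10 + -1 * w ^ 11 + -1 * w ^ 12 + -1 * w ^ 13 + 1 * w ^ 14 + 3 * w ^ 15 + -3 * w ^
        16 + 2 * w ^ 17 + -2 * w ^ 19 + 1 * w ^ 20))) hw
    simp only [zero_mul, mul_zero] at hX
    linear_combination D1 + hX - 7 * w * A * hΘ +
      w ^ 4 * φ ^ 9 * theta q w ^ 4 * theta q (w ^ 2) ^ 2 * hT +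
      w ^ 5 * (w ^ 7 + 1) * φ ^ 9 * theta q w ^ 6 * theta q (w ^ 2) ^ 4 * theta q (w ^ 3) ^ 2 * w7
  have hA0 : A ≠ 0 := by
    have := left_ne_zero_of_mul (left_ne_zero_of_mul hθ)
    have := right_ne_zero_of_mul (left_ne_zero_of_mul hθ)
    rw [hA]
    positivity
  apply mul_left_cancel₀ hA0
  linear_combination (-1 / 8) * D2 - 3072 * φ ^ 15 * hA +
    3072 * φ ^ 27 * theta q w ^ 4 * theta q (w ^ 2) ^ 2 * (w ^ 3 * (w ^ 7 + 1)) * w7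

lemma two_mul_thetaExp {ρ : ℤ} (hρ : |ρ| ≤ 5) (hodd : Odd ρ) (n : ℤ) :
    2 * (thetaExp ρ n : ℤ) = 7 * n ^ 2 + ρ * n := by
  have h := abs_mul_le_seven_mul_sq hρ n
  have h2 : Even (7 * n ^ 2 + ρ * n) := by
    obtain ⟨r, rfl⟩ := hodd
    obtain ⟨m, hm⟩ := Int.even_mul_succ_self n
    exact ⟨3 * n ^ 2 + r * n + m, by linear_combination hm⟩
  rw [thetaExp, Int.toNat_of_nonneg (Int.ediv_nonneg h (by norm_num)), Int.mul_ediv_cancel' h2.two_dvd]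

lemma thetaExp_injective {ρ : ℤ} (hρ : |ρ| ≤ 5) (hodd : Odd ρ) :
    Function.Injective (thetaExp ρ) := by
  intro n m h
  have h1 := two_mul_thetaExp hρ hodd n
  rw [h, two_mul_thetaExp hρ hodd m] at h1
  have h2 : (n - m) * (7 * (n + m) + ρ) = 0 := by linear_combination -h1
  have h3 := abs_le.1 hρ
  obtain ⟨k, hk⟩ := hodd
  rcases mul_eq_zero.1 h2 with h5 | h5 <;> omega

lemma sq_eq_thetaExp {ρ : ℤ} (hρ : |ρ| ≤ 5) (hodd : Odd ρ) (n : ℤ) :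
    (14 * n + ρ : ℂ) ^ 2 = 56 * thetaExp ρ n + ρ ^ 2 := by
  have h : (2 : ℂ) * (thetaExp ρ n : ℤ) = 7 * n ^ 2 + ρ * n := by
    exact_mod_cast congrArg (Int.cast : ℤ → ℂ) (two_mul_thetaExp hρ hodd n)
  push_cast at h
  linear_combination -28 * h

lemma summable_linear_pow_mul_geometric {r : ℝ} (h0 : 0 ≤ r) (h1 : r < 1) (c d : ℝ)
    (i : ℕ) : Summable fun k : ℕ => (c * k + d) ^ i * r ^ k := by
  have h := fun m : ℕ =>
    summable_pow_mul_geometric_of_norm_lt_one m (by rwa [Real.norm_of_nonneg h0] : ‖r‖ < 1)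
  simp only [add_pow, Finset.sum_mul]
  refine summable_sum fun m _ => ?_
  refine ((h m).mul_left (c ^ m * d ^ (i - m) * i.choose m)).congr fun k => ?_
  rw [mul_pow]
  ring

lemma thetaMoment_eq {ρ : ℤ} (hρ : |ρ| ≤ 5) (hodd : Odd ρ) (i : ℕ) (q : ℂ) :
    thetaMoment ρ (2 * i) q =
      ∑' n : ℤ, (-1) ^ n * (56 * thetaExp ρ n + ρ ^ 2 : ℂ) ^ i * q ^ thetaExp ρ n := by
  refine tsum_congr fun n => ?_
  rw [pow_mul, sq_eq_thetaExp hρ hodd]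

lemma summable_thetaExp {ρ : ℤ} (hρ : |ρ| ≤ 5) (hodd : Odd ρ) {r : ℝ} (h0 : 0 ≤ r) (h1 : r < 1)
    (i : ℕ) : Summable fun n : ℤ => (56 * thetaExp ρ n + ρ ^ 2 : ℝ) ^ i * r ^ thetaExp ρ n :=
  (summable_linear_pow_mul_geometric h0 h1 56 ((ρ : ℝ) ^ 2) i).comp_injective (thetaExp_injective hρ hodd)

lemma norm_thetaMoment_term (ρ : ℤ) (n : ℤ) (i e : ℕ) (q : ℂ) :
    ‖(-1) ^ n * (56 * e + ρ ^ 2 : ℂ) ^ i * q ^ e‖ = (56 * e + ρ ^ 2 : ℝ) ^ i * ‖q‖ ^ e := by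
  have : (56 * e + ρ ^ 2 : ℂ) = ((56 * e + ρ ^ 2 : ℝ) : ℂ) := by push_cast; rfl
  rw [norm_mul, norm_mul, norm_zpow, norm_neg, norm_one, one_zpow, one_mul, norm_pow, norm_pow,
    this, Complex.norm_real, Real.norm_of_nonneg (by positivity)]

lemma summable_thetaMoment {ρ : ℤ} (hρ : |ρ| ≤ 5) (hodd : Odd ρ) {q : ℂ} (hq : ‖q‖ < 1) (i : ℕ) :
    Summable fun n : ℤ => (-1) ^ n * (56 * thetaExp ρ n + ρ ^ 2 : ℂ) ^ i * q ^ thetaExp ρ n := by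
  refine Summable.of_norm ((summable_thetaExp hρ hodd (norm_nonneg q) hq i).congr fun n => ?_)
  rw [norm_thetaMoment_term]

/-- The operator `q d/dq` acts on the theta moments by raising the order. -/
lemma exists_hasDerivAt_thetaMoment {ρ : ℤ} (hρ : |ρ| ≤ 5) (hodd : Odd ρ) {q : ℂ} (hq : ‖q‖ < 1)
    (i : ℕ) : ∃ d, HasDerivAt (thetaMoment ρ (2 * i)) d q ∧
      q * d = (thetaMoment ρ (2 * (i + 1)) q - ρ ^ 2 * thetaMoment ρ (2 * i) q) / 56 := by
  obtain ⟨r, hqr, hr1⟩ := exists_between hq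
  have hr0 : 0 < r := (norm_nonneg q).trans_lt hqr
  have hmem : q ∈ Metric.ball (0 : ℂ) r := by simpa using hqr
  refine ⟨∑' n : ℤ, (-1) ^ n * (56 * thetaExp ρ n + ρ ^ 2 : ℂ) ^ i *
    (thetaExp ρ n * q ^ (thetaExp ρ n - 1)), ?_, ?_⟩
  · rw [show thetaMoment ρ (2 * i) = fun y => ∑' n : ℤ,
      (-1) ^ n * (56 * thetaExp ρ n + ρ ^ 2 : ℂ) ^ i * y ^ thetaExp ρ n from
        funext (thetaMoment_eq hρ hodd i)]
    refine hasDerivAt_tsum_of_isPreconnected (𝕜 := ℂ)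
      (g := fun (n : ℤ) (y : ℂ) =>
        (-1) ^ n * (56 * thetaExp ρ n + ρ ^ 2 : ℂ) ^ i * y ^ thetaExp ρ n)
      (g' := fun (n : ℤ) (y : ℂ) =>
        (-1) ^ n * (56 * thetaExp ρ n + ρ ^ 2 : ℂ) ^ i * (thetaExp ρ n * y ^ (thetaExp ρ n - 1)))
      ((summable_thetaExp hρ hodd hr0.le hr1 (i + 1)).mul_right r⁻¹) Metric.isOpen_ball
      (convex_ball _ _).isPreconnected (fun n y _ => (hasDerivAt_pow _ y).const_mul _)
      (fun n y hy => ?_) hmem (summable_thetaMoment hρ hodd hq i) hmem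
    generalize thetaExp ρ n = e
    have hy : ‖y‖ ≤ r := (by simpa using hy : ‖y‖ < r).le
    rcases e with _ | e
    · simp only [CharP.cast_eq_zero, zero_mul, mul_zero, norm_zero]
      positivity
    · have h1 := norm_thetaMoment_term ρ n i (e + 1) 1
      rw [one_pow, mul_one, norm_one, one_pow, mul_one] at h1
      rw [norm_mul, h1, norm_mul, norm_pow, Nat.add_sub_cancel, Complex.norm_natCast, pow_succ r,
        mul_assoc, mul_inv_cancel_right₀ hr0.ne', pow_succ _ i, mul_assoc]
      gcongr
      push_cast
      nlinarith [sq_nonneg (ρ : ℝ), (Nat.cast_nonneg e : (0 : ℝ) ≤ e)]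
  · rw [thetaMoment_eq hρ hodd, thetaMoment_eq hρ hodd, ← tsum_mul_left, ← tsum_mul_left,
      ← (summable_thetaMoment hρ hodd hq (i + 1)).tsum_sub
        ((summable_thetaMoment hρ hodd hq i).mul_left _), ← tsum_div_const]
    refine tsum_congr fun n => ?_
    generalize thetaExp ρ n = e
    rcases e with _ | e
    · simp
      ring
    · rw [Nat.add_sub_cancel]
      push_cast
      ring

/-- The part of Euler's product over the `n ≥ 1` with `P n`. -/
noncomputable def eulerPart (P : ℕ → Prop) [DecidablePred P] (q : ℂ) : ℂ :=
  ∏' n : ℕ, (1 + if P (n + 1) then -q ^ (n + 1) else 0)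

/-- The part of the Lambert series `∑ n q ^ n / (1 - q ^ n)` over the `n ≥ 1` with `P n`. -/
noncomputable def lambertPart (P : ℕ → Prop) [DecidablePred P] (q : ℂ) : ℂ :=
  ∑' n : ℕ, if P (n + 1) then ((n : ℂ) + 1) * q ^ (n + 1) / (1 - q ^ (n + 1)) else 0

section

variable (P : ℕ → Prop) [DecidablePred P]

lemma norm_ite_neg_pow_le (q : ℂ) (n : ℕ) :
    ‖if P (n + 1) then -q ^ (n + 1) else 0‖ ≤ ‖q‖ ^ (n + 1) := by
  split_ifs <;> simp

lemma summable_norm_ite_neg_pow {q : ℂ} (hq : ‖q‖ < 1) :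
    Summable fun n : ℕ => ‖if P (n + 1) then -q ^ (n + 1) else 0‖ :=
  Summable.of_nonneg_of_le (fun _ => norm_nonneg _) (norm_ite_neg_pow_le P q)
    ((summable_nat_add_iff 1).mpr (summable_geometric_of_lt_one (norm_nonneg _) hq))

lemma multipliable_eulerPart {q : ℂ} (hq : ‖q‖ < 1) :
    Multipliable fun n : ℕ => 1 + if P (n + 1) then -q ^ (n + 1) else 0 :=
  multipliable_one_add_of_summable (summable_norm_ite_neg_pow P hq)

lemma eulerPart_factor_ne_zero {q : ℂ} (hq : ‖q‖ < 1) (n : ℕ) :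
    (1 + if P (n + 1) then -q ^ (n + 1) else 0) ≠ 0 := by
  split_ifs
  · rw [← sub_eq_add_neg]
    exact sub_ne_zero.2 fun h => by
      have := norm_pow_lt_one hq n.succ_ne_zero
      rw [← h, norm_one] at this
      exact this.false
  · simp

lemma eulerPart_ne_zero {q : ℂ} (hq : ‖q‖ < 1) : eulerPart P q ≠ 0 :=
  tprod_one_add_ne_zero_of_summable (eulerPart_factor_ne_zero P hq)
    (summable_norm_ite_neg_pow P hq)

lemma differentiable_eulerPart_factor (n : ℕ) :
    Differentiable ℂ fun q : ℂ => 1 + if P (n + 1) then -q ^ (n + 1) else 0 := by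
  split_ifs <;> fun_prop

lemma multipliableLocallyUniformlyOn_eulerPart :
    MultipliableLocallyUniformlyOn
      (fun (n : ℕ) (q : ℂ) => 1 + if P (n + 1) then -q ^ (n + 1) else 0)
      (Metric.ball (0 : ℂ) 1) := by
  use eulerPart P
  apply hasProdLocallyUniformlyOn_of_forall_compact Metric.isOpen_ball
  intro K hK hcK
  rcases K.eq_empty_or_nonempty with hN | hN
  · simpa [hasProdUniformlyOn_iff_tendstoUniformlyOn, hN] using tendstoUniformlyOn_empty
  · obtain ⟨q₀, hq₀, _, HB⟩ := hcK.exists_sSup_image_eq_and_ge hN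
      (show ContinuousOn (fun q : ℂ => ‖q‖) K by fun_prop)
    refine ((summable_nat_add_iff 1).mpr (summable_geometric_of_lt_one (norm_nonneg _)
      (by simpa [Metric.mem_ball, dist_zero_right] using hK hq₀))).hasProdUniformlyOn_nat_one_add
      hcK (.of_forall fun n x hx => ?_) (fun n => ?_)
    · exact (norm_ite_neg_pow_le P x n).trans
        (pow_le_pow_left₀ (norm_nonneg _) (HB x hx) (n + 1))
    · split_ifs <;> fun_prop

lemma differentiableOn_eulerPart : DifferentiableOn ℂ (eulerPart P) (Metric.ball (0 : ℂ) 1) :=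
  (multipliableLocallyUniformlyOn_eulerPart P).hasProdLocallyUniformlyOn.differentiableOn
    (.of_forall fun s => by
      simpa [Finset.prod_fn] using DifferentiableOn.finsetProd (fun n _ =>
        (differentiable_eulerPart_factor P n).differentiableOn)) Metric.isOpen_ball

lemma summable_lambertPart {q : ℂ} (hq : ‖q‖ < 1) : Summable fun n : ℕ =>
    if P (n + 1) then ((n : ℂ) + 1) * q ^ (n + 1) / (1 - q ^ (n + 1)) else 0 := by
  have h := (summable_nat_add_iff 1).mpr
    (summable_norm_pow_mul_geometric_div_one_sub 1 hq).norm
  refine Summable.of_norm_bounded h fun n => ?_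
  split_ifs
  · simp
  · rw [norm_zero]
    exact norm_nonneg _

lemma mul_logDeriv_eulerPart {q : ℂ} (hq : ‖q‖ < 1) :
    q * logDeriv (eulerPart P) q = -lambertPart P q := by
  have hterm : ∀ n : ℕ, q * logDeriv
      (fun q : ℂ => 1 + if P (n + 1) then -q ^ (n + 1) else 0) q =
      -if P (n + 1) then ((n : ℂ) + 1) * q ^ (n + 1) / (1 - q ^ (n + 1)) else 0 := by
    intro n
    rw [logDeriv_apply]
    split_ifs
    · rw [deriv_const_add, deriv.fun_neg, deriv_pow_field]
      rw [Nat.add_sub_cancel, pow_succ]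
      push_cast
      ring
    · simp
  have hsum : Summable fun n : ℕ => logDeriv
      (fun q : ℂ => 1 + if P (n + 1) then -q ^ (n + 1) else 0) q := by
    rcases eq_or_ne q 0 with rfl | h0
    · refine summable_of_ne_finset_zero (s := {0}) fun n hn => ?_
      have hn : n ≠ 0 := by simpa using hn
      rw [logDeriv_apply]
      split_ifs
      · simp [hn]
      · simp
    · refine ((summable_lambertPart P hq).mul_left (-q⁻¹)).congr fun n => ?_
      rw [← mul_right_inj' h0, hterm]
      field_simp
  have hq' : q ∈ Metric.ball (0 : ℂ) 1 := by simpa using hq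
  have := logDeriv_tprod_eq_tsum Metric.isOpen_ball hq' (eulerPart_factor_ne_zero P hq)
    (fun n => (differentiable_eulerPart_factor P n).differentiableOn) hsum
    (multipliableLocallyUniformlyOn_eulerPart P) (eulerPart_ne_zero P hq)
  rw [show eulerPart P = fun q => ∏' n : ℕ, (1 + if P (n + 1) then -q ^ (n + 1) else 0) from rfl,
    this, ← tsum_mul_left, lambertPart, ← tsum_neg]
  exact tsum_congr hterm

lemma differentiableAt_lambertPart {q : ℂ} (hq : ‖q‖ < 1) :
    DifferentiableAt ℂ (lambertPart P) q := by
  have hq' : q ∈ Metric.ball (0 : ℂ) 1 := by simpa using hq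
  have hnhds := Metric.isOpen_ball.mem_nhds hq'
  have han := (differentiableOn_eulerPart P).analyticAt hnhds
  have h : DifferentiableAt ℂ (fun q => -(q * logDeriv (eulerPart P) q)) q :=
    (differentiableAt_id.mul (han.deriv.differentiableAt.div han.differentiableAt
      (eulerPart_ne_zero P hq))).neg
  refine h.congr_of_eventuallyEq ?_
  filter_upwards [hnhds] with x hx
  rw [mul_logDeriv_eulerPart P (by simpa using hx), neg_neg]

end

lemma eulerPart_mul_eulerPart {P Q R : ℕ → Prop} [DecidablePred P] [DecidablePred Q]
    [DecidablePred R] (hd : ∀ n, ¬ (P n ∧ Q n)) (hR : ∀ n, R n ↔ P n ∨ Q n) {q : ℂ}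
    (hq : ‖q‖ < 1) : eulerPart P q * eulerPart Q q = eulerPart R q := by
  rw [eulerPart, eulerPart, ← (multipliable_eulerPart P hq).tprod_mul (multipliable_eulerPart Q hq)]
  refine tprod_congr fun n => ?_
  have h1 := hd (n + 1)
  have h2 := hR (n + 1)
  by_cases hP : P (n + 1) <;> by_cases hQ : Q (n + 1) <;> simp_all

lemma lambertPart_add_lambertPart {P Q : ℕ → Prop} [DecidablePred P] [DecidablePred Q]
    (h : ∀ n, P n ↔ ¬ Q n) {q : ℂ}
    (hq : ‖q‖ < 1) : lambertPart P q + lambertPart Q q = lambertPart (fun _ => True) q := by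
  rw [lambertPart, lambertPart, ← (summable_lambertPart P hq).tsum_add (summable_lambertPart Q hq)]
  refine tsum_congr fun n => ?_
  have h2 := h (n + 1)
  by_cases hQ : Q (n + 1) <;> simp_all

lemma qPoch_pow_eq_eulerPart (q : ℂ) {N j : ℕ} (hj : 0 < j) (hjN : j ≤ N) :
    qPoch (q ^ N) (q ^ j) = eulerPart (fun n => n % N = j % N) q := by
  have hN : 0 < N := hj.trans_le hjN
  have hinj : Function.Injective fun n : ℕ => N * n + (j - 1) := fun a b hab => by
    simpa [hN.ne'] using hab
  have hsupp : Function.mulSupport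
      (fun n : ℕ => (1 : ℂ) + if (n + 1) % N = j % N then -q ^ (n + 1) else 0) ⊆
      Set.range fun n : ℕ => N * n + (j - 1) := by
    intro n hn
    by_contra hc
    refine hn ?_
    dsimp only
    rw [if_neg, add_zero]
    intro h
    refine hc ⟨(n + 1 - j) / N, ?_⟩
    have hjn : j ≤ n + 1 := by
      by_contra hlt
      push Not at hlt
      rw [Nat.mod_eq_of_lt (hlt.trans_le hjN)] at h
      rcases hjN.lt_or_eq with h' | h'
      · rw [Nat.mod_eq_of_lt h'] at h
        omega
      · rw [h', Nat.mod_self] at h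
        omega
    have hdvd : N ∣ n + 1 - j := (Nat.modEq_iff_dvd' hjn).1 h.symm
    dsimp only
    rw [Nat.mul_div_cancel' hdvd]
    omega
  rw [qPoch, eulerPart, ← hinj.tprod_eq hsupp]
  refine tprod_congr fun n => ?_
  have : N * n + (j - 1) + 1 = j + N * n := by omega
  rw [this, Nat.add_mul_mod_self_left, if_pos rfl, ← sub_eq_add_neg, pow_add, pow_mul]

lemma thetaMoment_zero_eq_eulerPart {q : ℂ} (hq : ‖q‖ < 1) (h0 : q ≠ 0) {ρ : ℤ} {a b : ℕ}
    (hρ : |ρ| ≤ 5) (hb : 2 * (b : ℤ) = 7 + ρ) (hab : a + b = 7) {P : ℕ → Prop} [DecidablePred P]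
    (hP : ∀ n, P n ↔ ¬ (n % 7 = 0 ∨ n % 7 = b ∨ n % 7 = a)) :
    thetaMoment ρ 0 q = eulerPart (fun n => ¬ P n) q := by
  have hρ' := abs_le.1 hρ
  rw [thetaMoment_zero_eq hq h0 hρ hb hab, qPoch_pow_eq_eulerPart q (by norm_num) le_rfl,
    qPoch_pow_eq_eulerPart q (by omega) (by omega), qPoch_pow_eq_eulerPart q (by omega) (by omega),
    Nat.mod_eq_of_lt (by omega : b < 7), Nat.mod_eq_of_lt (by omega : a < 7), Nat.mod_self,
    eulerPart_mul_eulerPart (R := fun n => n % 7 = 0 ∨ n % 7 = b) (by omega) (fun _ => Iff.rfl) hq]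
  exact eulerPart_mul_eulerPart (by omega) (fun n => by simp only [hP]; tauto) hq

lemma lambertPart_eq_thetaMoment {ρ : ℤ} {a b : ℕ} (hρ : |ρ| ≤ 5) (hb : 2 * (b : ℤ) = 7 + ρ)
    (hab : a + b = 7) {P : ℕ → Prop} [DecidablePred P]
    (hP : ∀ n, P n ↔ ¬ (n % 7 = 0 ∨ n % 7 = b ∨ n % 7 = a))
    {q : ℂ} (hq : ‖q‖ < 1) (h0 : q ≠ 0) :
    thetaMoment ρ 0 q ≠ 0 ∧ lambertPart P q = lambertPart (fun _ => True) q +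
      (thetaMoment ρ 2 q / thetaMoment ρ 0 q - ρ ^ 2) / 56 := by
  have hodd : Odd ρ := ⟨b - 4, by omega⟩
  have hθ := thetaMoment_zero_eq_eulerPart hq h0 hρ hb hab hP
  have hne0 : thetaMoment ρ 0 q ≠ 0 := hθ ▸ eulerPart_ne_zero _ hq
  refine ⟨hne0, ?_⟩
  have hev : thetaMoment ρ 0 =ᶠ[𝓝 q] eulerPart fun n => ¬ P n := by
    filter_upwards [Metric.isOpen_ball.mem_nhds (by simpa using hq : q ∈ Metric.ball (0 : ℂ) 1),
      isOpen_ne.mem_nhds h0] with x hx hx0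
    exact thetaMoment_zero_eq_eulerPart (by simpa using hx) hx0 hρ hb hab hP
  have hlog := mul_logDeriv_eulerPart (fun n => ¬ P n) hq
  obtain ⟨d, hd, hqd⟩ := exists_hasDerivAt_thetaMoment hρ hodd hq 0
  norm_num at hd hqd
  rw [logDeriv_apply, ← hev.deriv_eq, hd.deriv, ← hθ, ← mul_div_assoc, hqd] at hlog
  rw [← lambertPart_add_lambertPart (P := P) (Q := fun n => ¬ P n) (by simp) hq]
  field_simp at hlog ⊢
  linear_combination -hlog

lemma mul_deriv_lambertPart {ρ : ℤ} {a b : ℕ} (hρ : |ρ| ≤ 5) (hb : 2 * (b : ℤ) = 7 + ρ)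
    (hab : a + b = 7) {P : ℕ → Prop} [DecidablePred P]
    (hP : ∀ n, P n ↔ ¬ (n % 7 = 0 ∨ n % 7 = b ∨ n % 7 = a))
    {q : ℂ} (hq : ‖q‖ < 1) (h0 : q ≠ 0) :
    q * deriv (lambertPart P) q = q * deriv (lambertPart fun _ => True) q +
      (thetaMoment ρ 4 q / thetaMoment ρ 0 q - (thetaMoment ρ 2 q / thetaMoment ρ 0 q) ^ 2) /
        56 ^ 2 := by
  have hodd : Odd ρ := ⟨b - 4, by omega⟩
  have hne0 := (lambertPart_eq_thetaMoment hρ hb hab hP hq h0).1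
  have hev : lambertPart P =ᶠ[𝓝 q] fun x => lambertPart (fun _ => True) x +
      (thetaMoment ρ 2 x / thetaMoment ρ 0 x - ρ ^ 2) / 56 := by
    filter_upwards [Metric.isOpen_ball.mem_nhds (by simpa using hq : q ∈ Metric.ball (0 : ℂ) 1),
      isOpen_ne.mem_nhds h0] with x hx hx0
    exact (lambertPart_eq_thetaMoment hρ hb hab hP (by simpa using hx) hx0).2
  obtain ⟨d, hd, hqd⟩ := exists_hasDerivAt_thetaMoment hρ hodd hq 0
  obtain ⟨e, he, hqe⟩ := exists_hasDerivAt_thetaMoment hρ hodd hq 1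
  norm_num at hd hqd he hqe
  rw [hev.deriv_eq, ((differentiableAt_lambertPart (fun _ => True) hq).hasDerivAt.fun_add
    (((he.fun_div hd hne0).sub_const _).div_const 56)).deriv]
  field_simp
  linear_combination 56 * thetaMoment ρ 0 q * hqe - 56 * thetaMoment ρ 2 q * hqd

lemma tprod_one_sub_pow_eq_qPoch (q : ℂ) : ∏' n : ℕ, (1 - q ^ (n + 1)) = qPoch q q :=
  tprod_congr fun n => by rw [pow_succ']

/-- The modulus 7 determinantal identity (the `k = 3` case of the main theorem). -/
theorem mod7_identity (A₁ A₂ A₃ : ℂ → ℂ)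
    (hA₁ : A₁ = fun q : ℂ => 17 / 42 + ∑' n : ℕ,
      if (n + 1) % 7 = 2 ∨ (n + 1) % 7 = 3 ∨ (n + 1) % 7 = 4 ∨ (n + 1) % 7 = 5 then
        ((n : ℂ) + 1) * q ^ (n + 1) / (1 - q ^ (n + 1)) else 0)
    (hA₂ : A₂ = fun q : ℂ => 5 / 42 + ∑' n : ℕ,
      if (n + 1) % 7 = 1 ∨ (n + 1) % 7 = 3 ∨ (n + 1) % 7 = 4 ∨ (n + 1) % 7 = 6 then
        ((n : ℂ) + 1) * q ^ (n + 1) / (1 - q ^ (n + 1)) else 0)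
    (hA₃ : A₃ = fun q : ℂ => -(1 / 42) + ∑' n : ℕ,
      if (n + 1) % 7 = 1 ∨ (n + 1) % 7 = 2 ∨ (n + 1) % 7 = 5 ∨ (n + 1) % 7 = 6 then
        ((n : ℂ) + 1) * q ^ (n + 1) / (1 - q ^ (n + 1)) else 0)
    (D : (ℂ → ℂ) → (ℂ → ℂ)) (hD : D = fun F => fun q => q * deriv F q)
    (q : ℂ) (hq : ‖q‖ < 1) :
    Matrix.det !![(1 : ℂ), 1, 1; A₁ q, A₂ q, A₃ q; D A₁ q, D A₂ q, D A₃ q]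
      + Matrix.det !![(1 : ℂ), 1, 1; A₁ q, A₂ q, A₃ q; A₁ q ^ 2, A₂ q ^ 2, A₃ q ^ 2]
      = -(6 / 7 ^ 3) * ((∏' n : ℕ, (1 - q ^ (n + 1))) ^ 7
          / ∏' n : ℕ, (1 - (q ^ 7) ^ (n + 1))) ^ 2 := by
  rcases eq_or_ne q 0 with rfl | h0
  · subst hA₁ hA₂ hA₃ hD
    simp [Matrix.det_fin_three]
    norm_num
  set P₁ : ℕ → Prop := fun n => n % 7 = 2 ∨ n % 7 = 3 ∨ n % 7 = 4 ∨ n % 7 = 5 with hP₁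
  set P₂ : ℕ → Prop := fun n => n % 7 = 1 ∨ n % 7 = 3 ∨ n % 7 = 4 ∨ n % 7 = 6 with hP₂
  set P₃ : ℕ → Prop := fun n => n % 7 = 1 ∨ n % 7 = 2 ∨ n % 7 = 5 ∨ n % 7 = 6 with hP₃
  have e₁ : A₁ = fun q => 17 / 42 + lambertPart P₁ q := hA₁
  have e₂ : A₂ = fun q => 5 / 42 + lambertPart P₂ q := hA₂
  have e₃ : A₃ = fun q => -(1 / 42) + lambertPart P₃ q := hA₃
  have k₁ : ∀ n, P₁ n ↔ ¬ (n % 7 = 0 ∨ n % 7 = 6 ∨ n % 7 = 1) := by intro n; simp only [hP₁]; omega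
  have k₂ : ∀ n, P₂ n ↔ ¬ (n % 7 = 0 ∨ n % 7 = 5 ∨ n % 7 = 2) := by intro n; simp only [hP₂]; omega
  have k₃ : ∀ n, P₃ n ↔ ¬ (n % 7 = 0 ∨ n % 7 = 4 ∨ n % 7 = 3) := by intro n; simp only [hP₃]; omega
  obtain ⟨n₁, v₁⟩ := lambertPart_eq_thetaMoment (ρ := 5) (by norm_num) (by norm_num)
    (by norm_num) k₁ hq h0
  obtain ⟨n₂, v₂⟩ := lambertPart_eq_thetaMoment (ρ := 3) (by norm_num) (by norm_num)
    (by norm_num) k₂ hq h0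
  obtain ⟨n₃, v₃⟩ := lambertPart_eq_thetaMoment (ρ := 1) (by norm_num) (by norm_num)
    (by norm_num) k₃ hq h0
  have d₁ := mul_deriv_lambertPart (ρ := 5) (by norm_num) (by norm_num)
    (by norm_num) k₁ hq h0
  have d₂ := mul_deriv_lambertPart (ρ := 3) (by norm_num) (by norm_num)
    (by norm_num) k₂ hq h0
  have d₃ := mul_deriv_lambertPart (ρ := 1) (by norm_num) (by norm_num)
    (by norm_num) k₃ hq h0
  have hq7 : ‖q ^ 7‖ < 1 := norm_pow_lt_one hq (by norm_num)
  have hφ := qPoch_self_ne_zero hq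
  have hψ := qPoch_self_ne_zero hq7
  have hdet := det_thetaMoment hq h0
  have hprod := prod_thetaMoment_zero hq h0
  rw [tprod_one_sub_pow_eq_qPoch, tprod_one_sub_pow_eq_qPoch]
  simp only [hD, e₁, e₂, e₃, deriv_const_add, d₁, d₂, d₃, v₁, v₂, v₃]
  rw [Matrix.det_fin_three] at hdet ⊢
  rw [Matrix.det_fin_three]
  simp at hdet ⊢
  generalize lambertPart (fun _ => True) q = E
  generalize deriv (lambertPart fun _ => True) q = F
  generalize qPoch q q = φ at *
  generalize qPoch (q ^ 7) (q ^ 7) = ψ at *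
  generalize thetaMoment 1 0 q = x₀ at *
  generalize thetaMoment 1 2 q = x₂ at *
  generalize thetaMoment 1 4 q = x₄ at *
  generalize thetaMoment 3 0 q = y₀ at *
  generalize thetaMoment 3 2 q = y₂ at *
  generalize thetaMoment 3 4 q = y₄ at *
  generalize thetaMoment 5 0 q = z₀ at *
  generalize thetaMoment 5 2 q = z₂ at *
  generalize thetaMoment 5 4 q = z₄ at *
  have hR : -(6 / 7 ^ 3) * (φ ^ 7 / ψ) ^ 2 = -(3072 * φ ^ 15) / (56 ^ 3 * (x₀ * y₀ * z₀)) := by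
    rw [hprod]
    field_simp
    norm_num
  rw [← neg_mul, hR, ← hdet]
  field_simp
  ring
end
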